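/- arXiv:1203.3775 — 2 statements merged into one kernel-verified Lean document; each statement's English description precedes it below -/
import Mathlib

section
/- If p is a strictly positive form in R[x]_{3,2d} (i.e., p(x) > 0 for all nonzero x in R^3), and ℓ is a nonzero linear functional in Σ_{3,4d}^* with ℓ(p^2) = 0, then a contradiction follows under the hypotheses of the positive Gorenstein theorem; equivalently: the square p^2 of any strictly positive ternary form p of degree 2d lies in the interior of the cone Σ_{3,4d}. -/
open MvPolynomial


/-- A finite-dimensional commutative real algebra without real points contains a square root
of `-1`. -/
lemma exists_sq_neg_one {B : Type*} [CommRing B] [Algebra ℝ B] [FiniteDimensional ℝ B]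
    (hB : (B →ₐ[ℝ] ℝ) → False) : ∃ i : B, i * i = -1 := by
  have : IsArtinianRing B := IsArtinianRing.of_finite ℝ B
  have key : ∀ m : MaximalSpectrum B, ∃ j : B ⧸ m.asIdeal, j * j = -1 := by
    intro m
    have := m.isMaximal
    let : Field (B ⧸ m.asIdeal) := Ideal.Quotient.field _
    have : Algebra.IsAlgebraic ℝ (B ⧸ m.asIdeal) := Algebra.IsAlgebraic.of_finite _ _
    rcases Real.nonempty_algEquiv_or (B ⧸ m.asIdeal) with h | h
    · obtain ⟨e⟩ := h
      exact (hB (e.toAlgHom.comp (Ideal.Quotient.mkₐ ℝ m.asIdeal))).elim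
    · obtain ⟨e⟩ := h
      refine ⟨e.symm Complex.I, ?_⟩
      rw [← map_mul, Complex.I_mul_I, map_neg, map_one]
  choose j hj using key
  obtain ⟨y, hy⟩ := (IsArtinianRing.quotNilradicalEquivPi B).surjective j
  obtain ⟨x, rfl⟩ := Ideal.Quotient.mk_surjective y
  have hnil : IsNilpotent (x * x + 1) := by
    rw [← mem_nilradical, ← Ideal.Quotient.eq_zero_iff_mem]
    apply (IsArtinianRing.quotNilradicalEquivPi B).injective
    rw [map_add, map_mul, map_one, map_add, map_mul, hy, map_one, map_zero]
    funext m
    simp [hj]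
  have hu : IsUnit x := by
    have : IsUnit (x * x) := by
      have h := hnil.isUnit_sub_one
      rwa [add_sub_cancel_right] at h
    exact isUnit_of_mul_isUnit_left this
  have h2 : IsUnit (2 : B) := by
    have : IsUnit (algebraMap ℝ B 2) := (IsUnit.mk0 (2:ℝ) two_ne_zero).map _
    rwa [map_ofNat] at this
  obtain ⟨r, ⟨-, hr⟩, -⟩ := Polynomial.existsUnique_nilpotent_sub_and_aeval_eq_zero
    (P := (Polynomial.X ^ 2 + 1 : Polynomial ℝ)) (x := x)
    (by simpa [pow_two] using hnil) (by
      have := h2.mul hu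
      simpa [map_ofNat (algebraMap ℝ B) 2, one_add_one_eq_two] using this)
  refine ⟨r, ?_⟩
  have : r ^ 2 + 1 = 0 := by simpa using hr
  linear_combination this

/-- Cauchy-Schwarz consequence: isotropic vectors of a PSD form are in the radical. -/
lemma psd_radical {E : Type*} [AddCommGroup E] [Module ℝ E] (b : E →ₗ[ℝ] E →ₗ[ℝ] ℝ)
    (hs : ∀ u v, b u v = b v u) (V : Submodule ℝ E) (hV : ∀ v ∈ V, 0 ≤ b v v)
    (v : E) (hv : v ∈ V) (h0 : b v v = 0) (w : E) (hw : w ∈ V) : b v w = 0 := by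
  by_contra hne
  have h1 : ∀ t : ℝ, 0 ≤ 2 * t * b v w + b w w := by
    intro t
    have := hV (t • v + w) (V.add_mem (V.smul_mem t hv) hw)
    simp only [map_add, map_smul, LinearMap.add_apply, LinearMap.smul_apply, smul_eq_mul,
      h0, hs w v] at this
    linarith
  have := h1 (-(b w w + 1) / (2 * b v w))
  have e : 2 * (-(b w w + 1) / (2 * b v w)) * b v w = -(b w w + 1) := by
    field_simp
  linarith

lemma dim_bound {B : Type*} [CommRing B] [Algebra ℝ B] [FiniteDimensional ℝ B]
    (i : B) (hi : i * i = -1) (L : B →ₗ[ℝ] ℝ) (hL : ∀ b : B, (∀ c, L (b * c) = 0) → b = 0)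
    (V : Submodule ℝ B) (hV : ∀ v ∈ V, 0 ≤ L (v * v)) :
    2 * Module.finrank ℝ V ≤ Module.finrank ℝ B := by
  let b : LinearMap.BilinForm ℝ B := (LinearMap.mul ℝ B).compr₂ L
  have hb : ∀ u v, b u v = L (u * v) := fun _ _ => rfl
  have hs : ∀ u v, b u v = b v u := fun u v => by rw [hb, hb, mul_comm]
  let μ : B →ₗ[ℝ] B := LinearMap.mulLeft ℝ i
  have hμ : ∀ v, μ v = i * v := fun _ => rfl
  have hμi : Function.Injective μ := by
    intro u v h
    have : i * u = i * v := h
    linear_combination (-i) * this + (u - v) * hi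
  let V' := V.map μ
  have hd : Module.finrank ℝ V' = Module.finrank ℝ V :=
    (Submodule.equivMapOfInjective μ hμi V).finrank_eq.symm
  have hV' : ∀ v ∈ V', b v v ≤ 0 := by
    rintro _ ⟨v, hv, rfl⟩
    have := hV v hv
    rw [hb, hμ, show i * v * (i * v) = - (v * v) by linear_combination v * v * hi, map_neg]
    linarith
  have hnd : b.Nondegenerate := by
    refine ⟨fun x hx => hL x hx, fun x hx => hL x fun y => ?_⟩
    rw [mul_comm]; exact hx y
  have hinter : V ⊓ V' ≤ b.orthogonal (V ⊔ V') := by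
    rintro v ⟨hv, hv'⟩
    have h0 : b v v = 0 := le_antisymm (hV' v hv') (hV v hv)
    rw [LinearMap.BilinForm.mem_orthogonal_iff]
    intro n hn
    obtain ⟨a, ha, c, hc, rfl⟩ := Submodule.mem_sup.1 hn
    show b (a + c) v = 0
    rw [map_add, LinearMap.add_apply, hs a, hs c, psd_radical b hs V hV v hv h0 a ha]
    have := psd_radical (-b) (fun u v => by simp [hs u v]) V'
      (fun v hv => by simpa using hV' v hv) v hv' (by simp [h0]) c hc
    simpa using this
  have h1 := Submodule.finrank_sup_add_finrank_inf_eq V V'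
  have h2 := Submodule.finrank_mono hinter
  have h3 := LinearMap.BilinForm.finrank_orthogonal hnd (V ⊔ V')
  have h4 := Submodule.finrank_le (V ⊔ V')
  omega

lemma rayleigh_pd {U : Type*} [AddCommGroup U] [Module ℝ U] [FiniteDimensional ℝ U] [Nontrivial U]
    (b b' : U →ₗ[ℝ] U →ₗ[ℝ] ℝ) (hs : ∀ u v, b u v = b v u)
    (hpos : ∀ u, u ≠ 0 → 0 < b u u) :
    ∃ M : ℝ, (∀ u, b' u u ≤ M * b u u) ∧ ∃ u, u ≠ 0 ∧ b' u u = M * b u u := by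
  let core : InnerProductSpace.Core ℝ U :=
    { inner := fun u v => b u v
      conj_inner_symm := fun u v => by simp [hs u v]
      re_inner_nonneg := fun u => by
        by_cases h : u = 0
        · simp [h]
        · simpa using (hpos u h).le
      add_left := fun u v w => by simp
      smul_left := fun u v r => by simp
      definite := fun u h => by
        by_contra hu
        exact (hpos u hu).ne' h }
  let : NormedAddCommGroup U := core.toNormedAddCommGroup
  let : InnerProductSpace ℝ U := InnerProductSpace.ofCore core.toCore
  have hn : ∀ u : U, b u u = ‖u‖ ^ 2 := fun u => real_inner_self_eq_norm_sq u
  have : ProperSpace U := FiniteDimensional.proper ℝ U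
  have hc : Continuous fun u : U => b' u u := by
    have h1 : Continuous fun u : U => LinearMap.toContinuousLinearMap (b' u) :=
      LinearMap.continuous_of_finiteDimensional
        ((LinearMap.toContinuousLinearMap (𝕜 := ℝ) (E := U) (F' := ℝ)).toLinearMap.comp b')
    exact h1.clm_apply continuous_id
  obtain ⟨u, hu, hmax⟩ := (isCompact_sphere (0 : U) 1).exists_isMaxOn
    (NormedSpace.sphere_nonempty.2 zero_le_one) hc.continuousOn
  have hu1 : ‖u‖ = 1 := by simpa using hu
  refine ⟨b' u u, fun v => ?_, u, ?_, ?_⟩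
  · by_cases hv : v = 0
    · simp [hv]
    · have hv' : ‖v‖ ≠ 0 := norm_ne_zero_iff.2 hv
      have := hmax (a := ‖v‖⁻¹ • v) (by simp [norm_smul, hv'])
      simp only [map_smul, LinearMap.smul_apply, smul_eq_mul, Set.mem_ofPred_eq] at this
      rw [hn]
      calc b' v v = (‖v‖⁻¹ * (‖v‖⁻¹ * b' v v)) * ‖v‖ ^ 2 := by field_simp
        _ ≤ _ := by gcongr
  · rintro rfl; simp at hu1
  · rw [hn, hu1]; ring

lemma rayleigh {E : Type*} [AddCommGroup E] [Module ℝ E] [FiniteDimensional ℝ E]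
    (b b' : E →ₗ[ℝ] E →ₗ[ℝ] ℝ) (hs : ∀ u v, b u v = b v u) (hs' : ∀ u v, b' u v = b' v u)
    (hpsd : ∀ u, 0 ≤ b u u) (hb : b ≠ 0) (hker : LinearMap.ker b ≤ LinearMap.ker b') :
    ∃ M : ℝ, (∀ u, b' u u ≤ M * b u u) ∧ ∃ u, b u ≠ 0 ∧ b' u u = M * b u u := by
  obtain ⟨U, hU⟩ := Submodule.exists_isCompl (LinearMap.ker b)
  have hrad : ∀ u, b u u = 0 → b u = 0 := by
    intro u hu
    ext w
    by_contra hne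
    have h1 : ∀ t : ℝ, 0 ≤ 2 * t * b u w + b w w := by
      intro t
      have := hpsd (t • u + w)
      simp only [map_add, map_smul, LinearMap.add_apply, LinearMap.smul_apply, smul_eq_mul,
        hu, hs w u] at this
      linarith
    have h2 := h1 (-(b w w + 1) / (2 * b u w))
    have hne' : b u w ≠ 0 := hne
    have e : 2 * (-(b w w + 1) / (2 * b u w)) * b u w = -(b w w + 1) := by
      field_simp
    linarith
  have hnt : Nontrivial U := by
    rw [Submodule.nontrivial_iff_ne_bot]
    rintro rfl
    have := hU.sup_eq_top
    rw [sup_bot_eq, LinearMap.ker_eq_top] at this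
    exact hb this
  have hUk : ∀ u ∈ U, b u = 0 → u = 0 := fun u hu h =>
    (Submodule.mem_bot ℝ).1 (hU.inf_eq_bot ▸ ⟨h, hu⟩)
  obtain ⟨M, h1, u, hu0, hu⟩ := rayleigh_pd (b.domRestrict₁₂ U U) (b'.domRestrict₁₂ U U)
    (fun u v => hs u v) (fun u hu => lt_of_le_of_ne (hpsd u) fun h => hu (Subtype.ext
      (hUk u u.2 (hrad u h.symm))))
  refine ⟨M, fun v => ?_, u, fun h => hu0 (Subtype.ext (hUk u u.2 h)), hu⟩
  have hv : v ∈ LinearMap.ker b ⊔ U := hU.sup_eq_top ▸ Submodule.mem_top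
  obtain ⟨k, hk, w, hw, rfl⟩ := Submodule.mem_sup.1 hv
  have hk1 : b k = 0 := hk
  have hk2 : b' k = 0 := hker hk
  have := h1 ⟨w, hw⟩
  simp only [LinearMap.domRestrict₁₂_apply] at this
  simpa [hk1, hk2, hs w k, hs' w k] using this


/-- Homogeneous substitution of `x, y` into a univariate polynomial of degree at most `n`. -/
noncomputable def hm {B : Type*} [CommRing B] [Algebra ℝ B] (x y : B) (n : ℕ) :
    Polynomial ℝ →ₗ[ℝ] B :=
  (MvPolynomial.aeval (R := ℝ) ![x, y]).toLinearMap.comp (Polynomial.homogenizeLM n)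

lemma hm_mul {B : Type*} [CommRing B] [Algebra ℝ B] (x y : B) (m n : ℕ) (c e : Polynomial ℝ)
    (hc : c.natDegree ≤ m) (he : e.natDegree ≤ n) :
    hm x y (m + n) (c * e) = hm x y m c * hm x y n e := by
  simp [hm, Polynomial.homogenize_mul c e hc he]

lemma hm_one {B : Type*} [CommRing B] [Algebra ℝ B] (x y : B) (n : ℕ) :
    hm x y n 1 = y ^ n := by
  simp [hm]

lemma hm_X {B : Type*} [CommRing B] [Algebra ℝ B] (x y : B) :
    hm x y 1 Polynomial.X = x := by
  simp [hm]

lemma map_hm {B C : Type*} [CommRing B] [Algebra ℝ B] [CommRing C] [Algebra ℝ C]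
    (f : B →ₐ[ℝ] C) (x y : B) (n : ℕ) (c : Polynomial ℝ) :
    f (hm x y n c) = hm (f x) (f y) n c := by
  have : f.comp (MvPolynomial.aeval (R := ℝ) ![x, y]) = MvPolynomial.aeval (R := ℝ) ![f x, f y] := by
    ext i; fin_cases i <;> simp
  simp [hm, ← this]

lemma arith (D : ℕ) (hD : 1 ≤ D) (v k : ℕ → ℕ) (v0 : v 0 = 1)
    (hv : ∀ n, v (n + 1) + k (n + 1) = v n + (n + 2))
    (hk1 : ∀ n, k n ≤ n + 1)
    (hk : ∀ n, k n ≠ 0 → k (n + 1) < n + 2 → k n + 1 ≤ k (n + 1))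
    (hkD : ∀ m, m < D → 2 * (m + 1) ≤ k (D + m)) :
    v (2 * D - 1) < 2 * v D ∧ ∀ n, 2 * D - 1 ≤ n → k n = n + 1 := by
  have hk' : ∀ n, k n ≠ 0 → k n + 1 ≤ k (n + 1) := by
    intro n hn
    have := hk1 n
    by_cases h : k (n + 1) < n + 2
    · exact hk n hn h
    · omega
  have hkj : ∀ n j, k n ≠ 0 → k n + j ≤ k (n + j) := by
    intro n j hn
    induction j with
    | zero => simp
    | succ j ih =>
      have := hk' (n + j) (by omega)
      rw [← add_assoc, ← add_assoc]; omega
  have hind : ∀ m, m + 1 ≤ D → v (D + m) + v (D - 1 - m) ≤ v D + v (D - 1) := by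
    intro m
    induction m with
    | zero => simp
    | succ m ih =>
      intro hm
      have h1 := ih (by omega)
      have h2 := hv (D + m)
      have h3 := hv (D - 2 - m)
      rw [show D - 2 - m + 1 = D - 1 - m by omega] at h3
      rw [show D - 1 - (m + 1) = D - 2 - m by omega, show D + (m + 1) = D + m + 1 by omega]
      have h4 : 2 * (m + 1) + k (D - 1 - m) ≤ k (D + m + 1) := by
        by_cases h : k (D - 1 - m) = 0
        · have := hkD (m + 1) (by omega)
          rw [show D + (m + 1) = D + m + 1 by omega] at this
          omega
        · have := hkj (D - 1 - m) (2 * (m + 1)) h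
          rw [show D - 1 - m + 2 * (m + 1) = D + m + 1 by omega] at this
          omega
      omega
  constructor
  · have h1 := hind (D - 1) (by omega)
    rw [show D - 1 - (D - 1) = 0 by omega, v0, show D + (D - 1) = 2 * D - 1 by omega] at h1
    have h2 := hv (D - 1)
    have h3 := hk1 (D - 1 + 1)
    rw [show D - 1 + 1 = D by omega] at h2 h3
    omega
  · intro n hn
    have h1 := hkD (D - 1) (by omega)
    rw [show D + (D - 1) = 2 * D - 1 by omega] at h1
    have h2 := hkj (2 * D - 1) (n - (2 * D - 1)) (by omega)
    rw [show 2 * D - 1 + (n - (2 * D - 1)) = n by omega] at h2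
    have := hk1 n
    omega

lemma mem_degLT {c : Polynomial ℝ} {n : ℕ} :
    c ∈ Polynomial.degreeLT ℝ (n + 1) ↔ c.natDegree ≤ n := by
  rw [Polynomial.degreeLT_succ_eq_degreeLE, Polynomial.mem_degreeLE,
    Polynomial.natDegree_le_iff_degree_le]

lemma coprime_dim (p q : Polynomial ℝ) (D : ℕ) (hp : p.natDegree = D) (hD : 1 ≤ D)
    (hpq : IsCoprime p q) (m : ℕ) (hm : m < D)
    (K : Submodule ℝ (Polynomial ℝ)) [FiniteDimensional ℝ K]
    (h1 : ∀ c : Polynomial ℝ, c.natDegree ≤ m → c * p ∈ K)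
    (h2 : ∀ c : Polynomial ℝ, c.natDegree ≤ m → c * q ∈ K) :
    2 * (m + 1) ≤ Module.finrank ℝ K := by
  let P := Polynomial.degreeLT ℝ (m + 1)
  have hP : Module.finrank ℝ P = m + 1 := by
    rw [(Polynomial.degreeLTEquiv ℝ (m + 1)).finrank_eq]; simp
  have : FiniteDimensional ℝ P := Module.Finite.equiv (Polynomial.degreeLTEquiv ℝ (m + 1)).symm
  have hPd : ∀ c : P, (c : Polynomial ℝ).natDegree ≤ m := by
    exact fun c => mem_degLT.1 c.2
  let f : (P × P) →ₗ[ℝ] K := LinearMap.codRestrict K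
    (((LinearMap.mulRight ℝ p).comp P.subtype).coprod ((LinearMap.mulRight ℝ q).comp P.subtype))
    (fun c => K.add_mem (h1 _ (hPd c.1)) (h2 _ (hPd c.2)))
  have hf : Function.Injective f := by
    rw [← LinearMap.ker_eq_bot, LinearMap.ker_eq_bot']
    rintro ⟨a, b⟩ hab
    have h : (a : Polynomial ℝ) * p + b * q = 0 := congrArg Subtype.val hab
    have hp0 : p ≠ 0 := by rintro rfl; simp at hp; omega
    have hb : (b : Polynomial ℝ) = 0 := by
      have hd : p ∣ b := hpq.dvd_of_dvd_mul_right ⟨-a, by linear_combination h⟩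
      by_contra hb
      have := Polynomial.natDegree_le_of_dvd hd hb
      have := hPd b
      omega
    have ha : (a : Polynomial ℝ) = 0 := by
      rw [hb, zero_mul, add_zero] at h
      exact (mul_eq_zero.1 h).resolve_right hp0
    ext1
    · exact Subtype.ext ha
    · exact Subtype.ext hb
  have := LinearMap.finrank_le_finrank_of_injective hf
  rw [Module.finrank_prod, hP] at this
  omega

lemma finrank_degLT (n : ℕ) : Module.finrank ℝ (Polynomial.degreeLT ℝ n) = n := by
  rw [(Polynomial.degreeLTEquiv ℝ n).finrank_eq]; simp

instance finite_degLT (n : ℕ) : FiniteDimensional ℝ (Polynomial.degreeLT ℝ n) :=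
  Module.Finite.equiv (Polynomial.degreeLTEquiv ℝ n).symm

lemma hilbert {B : Type*} [CommRing B] [Algebra ℝ B] (x y : B) (V : ℕ → Submodule ℝ B)
    (hfin : ∀ n, FiniteDimensional ℝ (V n)) (hV0 : Module.finrank ℝ (V 0) = 1)
    (hmono : ∀ n, V n ≤ V (n + 1))
    (hmul : ∀ m n, ∀ a ∈ V m, ∀ b ∈ V n, a * b ∈ V (m + n))
    (hhm : ∀ n c, hm x y n c ∈ V n)
    (hsucc : ∀ n, ∀ v ∈ V (n + 1), ∃ w ∈ V n, ∃ c : Polynomial ℝ, c.natDegree ≤ n + 1 ∧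
      v = w + hm x y (n + 1) c)
    (htop : ∀ b, ∃ n, b ∈ V n)
    (p q : Polynomial ℝ) (D : ℕ) (hp : p.natDegree = D) (hD : 1 ≤ D)
    (hq : q.natDegree ≤ D) (hpq : IsCoprime p q)
    (hpV : hm x y D p ∈ V (D - 1)) (hqV : hm x y D q ∈ V (D - 1)) :
    FiniteDimensional ℝ B ∧ Module.finrank ℝ B < 2 * Module.finrank ℝ (V D) := by
  let K : ℕ → Submodule ℝ (Polynomial ℝ) := fun n => match n with
    | 0 => ⊥
    | n + 1 => Polynomial.degreeLT ℝ (n + 2) ⊓ (V n).comap (hm x y (n + 1))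
  have hK : ∀ n c, c ∈ K (n + 1) ↔ c.natDegree ≤ n + 1 ∧ hm x y (n + 1) c ∈ V n := by
    intro n c
    show c ∈ Polynomial.degreeLT ℝ (n + 2) ⊓ (V n).comap (hm x y (n + 1)) ↔ _
    rw [Submodule.mem_inf, mem_degLT, Submodule.mem_comap]
  have hKle : ∀ n, K n ≤ Polynomial.degreeLT ℝ (n + 1) := by
    intro n
    cases n with
    | zero => exact bot_le
    | succ n => exact inf_le_left
  have hKfin : ∀ n, FiniteDimensional ℝ (K n) := fun n =>
    Submodule.finiteDimensional_of_le (hKle n)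
  have hone : y ∈ V 1 := by simpa [hm_one] using hhm 1 1
  have honex : x ∈ V 1 := by simpa [hm_X] using hhm 1 Polynomial.X
  have key := arith D hD (fun n => Module.finrank ℝ (V n)) (fun n => Module.finrank ℝ (K n)) hV0
    ?_ ?_ ?_ ?_
  · obtain ⟨k1, k2⟩ := key
    have hstep : ∀ n, 2 * D - 1 ≤ n → V (n + 1) ≤ V n := by
      intro n hn v hv
      obtain ⟨w, hw, c, hc, rfl⟩ := hsucc n v hv
      have h : K (n + 1) = Polynomial.degreeLT ℝ (n + 1 + 1) := by
        refine Submodule.eq_of_le_of_finrank_eq (hKle (n + 1)) ?_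
        rw [finrank_degLT]
        exact k2 (n + 1) (by omega)
      have : c ∈ K (n + 1) := by rw [h]; exact mem_degLT.2 hc
      exact (V n).add_mem hw ((hK n c).1 this).2
    have hall : ∀ j, V (2 * D - 1 + j) ≤ V (2 * D - 1) := by
      intro j
      induction j with
      | zero => exact le_rfl
      | succ j ih => exact (hstep (2 * D - 1 + j) (by omega)).trans ih
    have hmon : Monotone V := monotone_nat_of_le_succ hmono
    have htop' : V (2 * D - 1) = ⊤ := by
      rw [eq_top_iff]
      intro b _
      obtain ⟨n, hn⟩ := htop b
      exact hall n (hmon (by omega) hn)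
    have h3 := hfin (2 * D - 1)
    rw [htop'] at h3
    refine ⟨Module.Finite.equiv (Submodule.topEquiv : (⊤ : Submodule ℝ B) ≃ₗ[ℝ] B), ?_⟩
    have k3 : Module.finrank ℝ (V (2 * D - 1)) < 2 * Module.finrank ℝ (V D) := k1
    rwa [htop', finrank_top] at k3
  · intro n
    let f : Polynomial.degreeLT ℝ (n + 2) →ₗ[ℝ] (V (n + 1) ⧸ (V n).comap (V (n + 1)).subtype) :=
      (Submodule.mkQ _).comp (LinearMap.codRestrict (V (n + 1))
        ((hm x y (n + 1)).comp (Polynomial.degreeLT ℝ (n + 2)).subtype) (fun c => hhm _ _))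
    have hf : Function.Surjective f := by
      intro u
      obtain ⟨⟨v, hv⟩, rfl⟩ := Submodule.mkQ_surjective _ u
      obtain ⟨w, hw, c, hc, rfl⟩ := hsucc n v hv
      refine ⟨⟨c, mem_degLT.2 hc⟩, ?_⟩
      refine (Submodule.Quotient.eq _).2 ?_
      show hm x y (n + 1) c - (w + hm x y (n + 1) c) ∈ V n
      simpa using hw
    have hker : LinearMap.ker f = (K (n + 1)).comap (Polynomial.degreeLT ℝ (n + 2)).subtype := by
      ext c
      rw [LinearMap.mem_ker, Submodule.mem_comap]
      refine (Submodule.Quotient.mk_eq_zero _).trans ?_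
      show hm x y (n + 1) c ∈ V n ↔ _
      exact ⟨fun h => (hK n _).2 ⟨mem_degLT.1 c.2, h⟩, fun h => ((hK n _).1 h).2⟩
    have e1 := LinearMap.finrank_range_add_finrank_ker f
    rw [LinearMap.range_eq_top.2 hf, finrank_top, hker, finrank_degLT,
      (Submodule.comapSubtypeEquivOfLe (hKle (n + 1))).finrank_eq] at e1
    have e2 := Submodule.finrank_quotient_add_finrank ((V n).comap (V (n + 1)).subtype)
    rw [(Submodule.comapSubtypeEquivOfLe (hmono n)).finrank_eq] at e2
    show Module.finrank ℝ (V (n + 1)) + Module.finrank ℝ (K (n + 1)) = _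
    omega
  · intro n
    have := Submodule.finrank_mono (hKle n)
    rwa [finrank_degLT] at this
  · intro n hn _
    cases n with
    | zero => exact (hn (finrank_bot ℝ _)).elim
    | succ n =>
      have hle : K (n + 1) ≤ K (n + 2) := by
        intro c hc
        rw [hK] at hc
        rw [hK]
        refine ⟨by omega, ?_⟩
        have : hm x y (n + 1 + 1) (c * 1) = hm x y (n + 1) c * hm x y 1 1 :=
          hm_mul _ _ _ _ _ _ hc.1 (by simp)
        rw [mul_one] at this
        rw [this]
        exact hmul _ _ _ hc.2 _ (hhm 1 1)
      have hX : ∀ c ∈ K (n + 1), c * Polynomial.X ∈ K (n + 2) := by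
        intro c hc
        rw [hK] at hc
        rw [hK]
        refine ⟨?_, ?_⟩
        · refine Polynomial.natDegree_mul_le.trans ?_
          simp; omega
        · rw [hm_mul x y (n + 1) 1 c Polynomial.X hc.1 (by simp)]
          exact hmul _ _ _ hc.2 _ (hhm 1 _)
      have hlt : K (n + 1) < K (n + 2) := by
        refine lt_of_le_of_ne hle fun heq => ?_
        have hne : K (n + 1) ≠ ⊥ := fun h => hn (by rw [h]; exact finrank_bot ℝ _)
        obtain ⟨c, hc, hc0⟩ := Submodule.exists_mem_ne_zero_of_ne_bot hne
        have hpow : ∀ j, c * Polynomial.X ^ j ∈ K (n + 1) := by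
          intro j
          induction j with
          | zero => simpa using hc
          | succ j ih => rw [pow_succ, ← mul_assoc, heq]; exact hX _ ih
        have := ((hK _ _).1 (hpow (n + 2))).1
        rw [Polynomial.natDegree_mul_X_pow _ hc0] at this
        omega
      exact Submodule.finrank_lt_finrank_of_lt hlt
  · intro m hm'
    have aux : ∀ r : Polynomial ℝ, r.natDegree ≤ D → hm x y D r ∈ V (D - 1) →
        ∀ c : Polynomial ℝ, c.natDegree ≤ m → c * r ∈ K (D + m) := by
      intro r hr hrV c hc
      rw [show D + m = (m + (D - 1)) + 1 by omega, hK, show m + (D - 1) + 1 = m + D by omega]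
      refine ⟨Polynomial.natDegree_mul_le.trans (by omega), ?_⟩
      rw [hm_mul x y m D c r hc hr]
      exact hmul _ _ _ (hhm _ _) _ hrV
    exact coprime_dim p q D hp hD hpq m hm' (K (D + m)) (aux p hp.le hpV) (aux q hq hqV)


/-- Restriction to the line `z = 0`, dehomogenized by `y = 1`. -/
noncomputable def d1 : MvPolynomial (Fin 3) ℝ →ₐ[ℝ] Polynomial ℝ :=
  aeval ![Polynomial.X, 1, 0]

/-- Dehomogenization `z = 1`. -/
noncomputable def dz : MvPolynomial (Fin 3) ℝ →ₐ[ℝ] MvPolynomial (Fin 2) ℝ :=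
  aeval ![X 0, X 1, 1]

lemma d1_natDegree {f : MvPolynomial (Fin 3) ℝ} {n : ℕ} (hf : f.IsHomogeneous n) :
    (d1 f).natDegree ≤ n := by
  refine (MvPolynomial.aeval_natDegree_le (m := n) (n := 1) f hf.totalDegree_le _ ?_).trans (by simp)
  intro i
  fin_cases i <;> simp

lemma hm_homog (n : ℕ) (c : Polynomial ℝ) :
    (hm (X 0 : MvPolynomial (Fin 3) ℝ) (X 1) n c).IsHomogeneous n := by
  have := (Polynomial.isHomogeneous_homogenize (n := n) c).aeval (n := 1)
    ![(X 0 : MvPolynomial (Fin 3) ℝ), X 1]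
    (by intro i; fin_cases i <;> exact isHomogeneous_X _ _)
  simpa [hm] using this

lemma d1_hm {n : ℕ} {c : Polynomial ℝ} (hc : c.natDegree ≤ n) :
    d1 (hm (X 0 : MvPolynomial (Fin 3) ℝ) (X 1) n c) = c := by
  rw [map_hm]
  simp [hm, d1, hc]

lemma d1_Z : d1 (X 2) = 0 := by simp [d1]

lemma decomp {f : MvPolynomial (Fin 3) ℝ} {n : ℕ} (hf : f.IsHomogeneous (n + 1)) :
    ∃ g : MvPolynomial (Fin 3) ℝ, g.IsHomogeneous n ∧ f = X 2 * g + hm (X 0) (X 1) (n + 1) (d1 f) := by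
  have h1 : Polynomial.homogenize (d1 f) (n + 1) =
      aeval ![(X 0 : MvPolynomial (Fin 2) ℝ), X 1, 0] f := by
    apply Polynomial.homogenize_eq_of_isHomogeneous
    · have := hf.aeval (n := 1) ![(X 0 : MvPolynomial (Fin 2) ℝ), X 1, 0] (by
        intro i
        fin_cases i
        · exact isHomogeneous_X _ _
        · exact isHomogeneous_X _ _
        · exact isHomogeneous_zero _ _ _)
      simpa using this
    · rw [← AlgHom.comp_apply]
      unfold d1
      congr 1
      ext i
      fin_cases i <;> simp
  have h2 : hm (X 0) (X 1) (n + 1) (d1 f) =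
      aeval ![(X 0 : MvPolynomial (Fin 3) ℝ), X 1, 0] f := by
    simp only [hm, LinearMap.comp_apply, Polynomial.homogenizeLM_apply, h1, AlgHom.toLinearMap_apply]
    rw [← AlgHom.comp_apply]
    congr 1
    ext i
    fin_cases i <;> simp
  have h3 : (X 2 : MvPolynomial (Fin 3) ℝ) ∣ f - hm (X 0) (X 1) (n + 1) (d1 f) := by
    rw [h2, ← Ideal.mem_span_singleton, ← Ideal.Quotient.eq]
    have : (Ideal.Quotient.mkₐ ℝ (Ideal.span {(X 2 : MvPolynomial (Fin 3) ℝ)})) =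
        (Ideal.Quotient.mkₐ ℝ (Ideal.span {(X 2 : MvPolynomial (Fin 3) ℝ)})).comp
          (aeval ![(X 0 : MvPolynomial (Fin 3) ℝ), X 1, 0]) := by
      apply MvPolynomial.algHom_ext
      intro i
      fin_cases i
      · simp
      · simp
      · simp [Ideal.Quotient.eq_zero_iff_mem, Ideal.mem_span_singleton]
    exact DFunLike.congr_fun this f
  obtain ⟨g, hg⟩ := h3
  refine ⟨g, ?_, by rw [← hg]; ring⟩
  have h4 : (X 2 * g).IsHomogeneous (n + 1) := hg ▸ hf.sub (hm_homog _ _)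
  intro m hmne
  have := @h4 (Finsupp.single 2 1 + m) (by rwa [coeff_X_mul])
  rw [map_add] at this
  have e : (Finsupp.weight (1 : Fin 3 → ℕ)) (Finsupp.single (2 : Fin 3) 1) = 1 := by
    simp [Finsupp.weight_apply]
  rw [e] at this
  omega

lemma regz {p q : MvPolynomial (Fin 3) ℝ} {D : ℕ} (hp : p.IsHomogeneous D)
    (hq : q.IsHomogeneous D) (hD : 1 ≤ D) (hp1 : (d1 p).natDegree = D)
    (hpq : IsCoprime (d1 p) (d1 q)) (g a b : MvPolynomial (Fin 3) ℝ) (N : ℕ)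
    (ha : a.IsHomogeneous (N + 1)) (hb : b.IsHomogeneous (N + 1))
    (h : X 2 * g = a * p + b * q) :
    ∃ a' b' : MvPolynomial (Fin 3) ℝ, a'.IsHomogeneous N ∧ b'.IsHomogeneous N ∧
      g = a' * p + b' * q := by
  have h0 : d1 a * d1 p + d1 b * d1 q = 0 := by
    have := congrArg d1 h
    simpa [d1_Z] using this.symm
  have hp0 : d1 p ≠ 0 := by intro h; rw [h] at hp1; simp at hp1; omega
  obtain ⟨c1, hc1⟩ : d1 p ∣ d1 b :=
    hpq.dvd_of_dvd_mul_right ⟨-d1 a, by linear_combination h0⟩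
  have ha1 : d1 a = - (c1 * d1 q) := by
    apply mul_right_cancel₀ hp0
    rw [hc1] at h0
    linear_combination h0
  obtain ⟨c, hcp, hcq, hc⟩ : ∃ c : MvPolynomial (Fin 3) ℝ, (c * p).IsHomogeneous (N + 1) ∧
      (c * q).IsHomogeneous (N + 1) ∧ d1 c = c1 := by
    by_cases hc0 : c1 = 0
    · exact ⟨0, by simpa using isHomogeneous_zero _ _ _, by simpa using isHomogeneous_zero _ _ _,
        by simp [hc0]⟩
    · have hb1 := d1_natDegree hb
      rw [hc1, Polynomial.natDegree_mul hp0 hc0, hp1] at hb1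
      have e : (N + 1 - D) + D = N + 1 := by omega
      refine ⟨hm (X 0) (X 1) (N + 1 - D) c1, ?_, ?_, d1_hm (by omega)⟩
      · rw [← e]; exact (by simpa using hm_homog (N + 1 - D) c1 : IsHomogeneous _ _).mul hp
      · rw [← e]; exact (by simpa using hm_homog (N + 1 - D) c1 : IsHomogeneous _ _).mul hq
  obtain ⟨a', ha', ea⟩ := decomp (ha.add hcq)
  obtain ⟨b', hb', eb⟩ := decomp (hb.sub hcp)
  have z1 : d1 (a + c * q) = 0 := by rw [map_add, map_mul, hc, ha1]; ring
  have z2 : d1 (b - c * p) = 0 := by rw [map_sub, map_mul, hc, hc1]; ring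
  rw [z1, map_zero, add_zero] at ea
  rw [z2, map_zero, add_zero] at eb
  refine ⟨a', b', ha', hb', ?_⟩
  apply mul_left_cancel₀ (X_ne_zero (2 : Fin 3) (R := ℝ))
  linear_combination h + p * ea + q * eb

lemma regzk {p q : MvPolynomial (Fin 3) ℝ} {D : ℕ} (hp : p.IsHomogeneous D)
    (hq : q.IsHomogeneous D) (hD : 1 ≤ D) (hp1 : (d1 p).natDegree = D)
    (hpq : IsCoprime (d1 p) (d1 q)) (g : MvPolynomial (Fin 3) ℝ) (N k : ℕ) :
    ∀ a b : MvPolynomial (Fin 3) ℝ, a.IsHomogeneous (N + k) → b.IsHomogeneous (N + k) →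
    X 2 ^ k * g = a * p + b * q →
    ∃ a' b' : MvPolynomial (Fin 3) ℝ, a'.IsHomogeneous N ∧ b'.IsHomogeneous N ∧
      g = a' * p + b' * q := by
  induction k with
  | zero => intro a b ha hb h; exact ⟨a, b, ha, hb, by simpa using h⟩
  | succ k ih =>
    intro a b ha hb h
    obtain ⟨a', b', ha', hb', h'⟩ := regz hp hq hD hp1 hpq (X 2 ^ k * g) a b (N + k) ha hb
      (by rw [← h]; ring)
    exact ih a' b' ha' hb' h'

lemma dz_Z : dz (X 2) = 1 := by simp [dz]

lemma dz_surj (s : MvPolynomial (Fin 2) ℝ) :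
    ∃ N₀, ∀ N, N₀ ≤ N → ∃ f : MvPolynomial (Fin 3) ℝ, f.IsHomogeneous N ∧ dz f = s := by
  induction s using MvPolynomial.induction_on with
  | C a =>
    refine ⟨0, fun N _ => ⟨C a * X 2 ^ N, isHomogeneous_C_mul_X_pow _ _ _, ?_⟩⟩
    simp [dz]
  | add s t hs ht =>
    obtain ⟨N₁, h1⟩ := hs
    obtain ⟨N₂, h2⟩ := ht
    refine ⟨max N₁ N₂, fun N hN => ?_⟩
    obtain ⟨f, hf, rfl⟩ := h1 N (le_trans (le_max_left _ _) hN)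
    obtain ⟨g, hg, rfl⟩ := h2 N (le_trans (le_max_right _ _) hN)
    exact ⟨f + g, hf.add hg, map_add _ _ _⟩
  | mul_X s i hs =>
    obtain ⟨N₁, h1⟩ := hs
    refine ⟨N₁ + 1, fun N hN => ?_⟩
    obtain ⟨f, hf, rfl⟩ := h1 (N - 1) (by omega)
    refine ⟨f * X (Fin.castSucc i), ?_, ?_⟩
    · have := hf.mul (isHomogeneous_X ℝ (Fin.castSucc i))
      rwa [show N - 1 + 1 = N by omega] at this
    · rw [map_mul]
      congr 1
      fin_cases i <;> simp [dz]

lemma homog_eval_smul {f : MvPolynomial (Fin 3) ℝ} {n : ℕ} (hf : f.IsHomogeneous n) (c : ℝ)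
    (v : Fin 3 → ℝ) : eval (c • v) f = c ^ n * eval v f := by
  rw [eval_eq', eval_eq', Finset.mul_sum]
  refine Finset.sum_congr rfl fun m hm => ?_
  have h := hf (mem_support_iff.1 hm)
  rw [Finsupp.weight_apply, Finsupp.sum_fintype _ _ (by simp)] at h
  simp only [Pi.one_apply, smul_eq_mul, mul_one] at h
  simp only [Pi.smul_apply, smul_eq_mul, mul_pow, Finset.prod_mul_distrib,
    Finset.prod_pow_eq_pow_sum, h]
  ring

lemma dz_inj {f : MvPolynomial (Fin 3) ℝ} {n : ℕ} (hf : f.IsHomogeneous n) (h : dz f = 0) :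
    f = 0 := by
  have h1 : X 2 * f = 0 := by
    apply MvPolynomial.funext
    intro v
    rw [map_mul, eval_X, map_zero]
    by_cases hv : v 2 = 0
    · simp [hv]
    · have h2 : eval ![v 0 / v 2, v 1 / v 2, 1] f = 0 := by
        have h3 := congrArg (aeval (R := ℝ) ![v 0 / v 2, v 1 / v 2]) h
        rw [map_zero] at h3
        rw [← h3, dz, ← AlgHom.comp_apply, ← MvPolynomial.coe_aeval_eq_eval]
        show aeval _ f = _
        congr 1
        ext i
        fin_cases i <;> simp
      have h4 : v = v 2 • ![v 0 / v 2, v 1 / v 2, 1] := by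
        ext i
        fin_cases i <;> simp <;> field_simp
      rw [h4, homog_eval_smul hf, h2]
      simp
  exact (mul_eq_zero.1 h1).resolve_left (X_ne_zero _)

lemma ideal_inter {p q : MvPolynomial (Fin 3) ℝ} {D : ℕ} (hp : p.IsHomogeneous D)
    (hq : q.IsHomogeneous D) (hD : 1 ≤ D) (hp1 : (d1 p).natDegree = D)
    (hpq : IsCoprime (d1 p) (d1 q)) (g : MvPolynomial (Fin 3) ℝ) (hg : g.IsHomogeneous (D + D))
    (h : dz g ∈ Ideal.span {dz p, dz q}) :
    ∃ a b : MvPolynomial (Fin 3) ℝ, a.IsHomogeneous D ∧ b.IsHomogeneous D ∧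
      g = a * p + b * q := by
  obtain ⟨s, t, hst⟩ := Ideal.mem_span_pair.1 h
  obtain ⟨N₁, h1⟩ := dz_surj s
  obtain ⟨N₂, h2⟩ := dz_surj t
  let k := N₁ + N₂
  obtain ⟨a, ha, rfl⟩ := h1 (D + k) (by omega)
  obtain ⟨b, hb, rfl⟩ := h2 (D + k) (by omega)
  refine regzk hp hq hD hp1 hpq g D k a b ha hb ?_
  have e : (X 2 ^ k * g - (a * p + b * q)).IsHomogeneous (D + k + D) := by
    refine IsHomogeneous.sub ?_ ((ha.mul hp).add (hb.mul hq))
    have := (isHomogeneous_X_pow (R := ℝ) (2 : Fin 3) k).mul hg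
    rwa [show k + (D + D) = D + k + D by ring] at this
  have := dz_inj e (by simp [dz_Z, hst])
  exact sub_eq_zero.1 this


lemma factor_dual {M N : Type*} [AddCommGroup M] [Module ℝ M] [AddCommGroup N] [Module ℝ N]
    (φ : M →ₗ[ℝ] N) (l : M →ₗ[ℝ] ℝ) (h : ∀ x, φ x = 0 → l x = 0) :
    ∃ L : N →ₗ[ℝ] ℝ, ∀ x, L (φ x) = l x := by
  have h1 : l ∈ (LinearMap.ker φ).dualAnnihilator := by
    rw [Submodule.mem_dualAnnihilator]
    exact fun x hx => h x (LinearMap.mem_ker.1 hx)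
  rw [← LinearMap.range_dualMap_eq_dualAnnihilator_ker] at h1
  obtain ⟨L, hL⟩ := h1
  exact ⟨L, fun x => by rw [← hL]; rfl⟩

lemma final_contra {p q : MvPolynomial (Fin 3) ℝ} {D : ℕ} (hp : p.IsHomogeneous D)
    (hq : q.IsHomogeneous D) (hD : 1 ≤ D) (hp1 : (d1 p).natDegree = D)
    (hpq : IsCoprime (d1 p) (d1 q))
    (hpos : ∀ x : Fin 3 → ℝ, x ≠ 0 → 0 < eval x p)
    (l : MvPolynomial (Fin 3) ℝ →ₗ[ℝ] ℝ)
    (hl : ∀ f : MvPolynomial (Fin 3) ℝ, f.IsHomogeneous D → 0 ≤ l (f * f))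
    (hpl : ∀ f : MvPolynomial (Fin 3) ℝ, f.IsHomogeneous D → l (f * p) = 0)
    (hql : ∀ f : MvPolynomial (Fin 3) ℝ, f.IsHomogeneous D → l (f * q) = 0)
    (hne : ∃ f : MvPolynomial (Fin 3) ℝ, f.IsHomogeneous (D + D) ∧ l f ≠ 0) : False := by
  let K : Ideal (MvPolynomial (Fin 2) ℝ) := Ideal.span {dz p, dz q}
  obtain ⟨L', hL'⟩ := factor_dual
    (((Ideal.Quotient.mkₐ ℝ K).toLinearMap.comp dz.toLinearMap).comp
      (homogeneousSubmodule (Fin 3) ℝ (D + D)).subtype)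
    (l.comp (homogeneousSubmodule (Fin 3) ℝ (D + D)).subtype) (by
      rintro ⟨g, hg⟩ h
      have h' : dz g ∈ K := Ideal.Quotient.eq_zero_iff_mem.1 h
      obtain ⟨a, b, ha, hb, e⟩ := ideal_inter hp hq hD hp1 hpq g hg h'
      show l g = 0
      rw [e, map_add, hpl a ha, hql b hb, add_zero])
  let Lt : MvPolynomial (Fin 2) ℝ →ₗ[ℝ] ℝ := L'.comp (Ideal.Quotient.mkₐ ℝ K).toLinearMap
  have hLt : ∀ g : MvPolynomial (Fin 3) ℝ, g.IsHomogeneous (D + D) → Lt (dz g) = l g :=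
    fun g hg => hL' ⟨g, hg⟩
  have hLK : ∀ s ∈ K, Lt s = 0 := by
    intro s hs
    have : (Ideal.Quotient.mkₐ ℝ K) s = 0 := Ideal.Quotient.eq_zero_iff_mem.2 hs
    show L' ((Ideal.Quotient.mkₐ ℝ K) s) = 0
    rw [this, map_zero]
  clear_value Lt
  let J : Ideal (MvPolynomial (Fin 2) ℝ) :=
    { carrier := {s | ∀ t, Lt (s * t) = 0}
      add_mem' := by
        intro a b ha hb t
        rw [add_mul, map_add, ha t, hb t, add_zero]
      zero_mem' := by intro t; simp
      smul_mem' := by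
        intro c x hx t
        have := hx (c * t)
        rwa [show x * (c * t) = c • x * t by rw [smul_eq_mul]; ring] at this }
  have hJ : ∀ s, s ∈ J ↔ ∀ t, Lt (s * t) = 0 := fun s => Iff.rfl
  have hKJ : ∀ s ∈ K, s ∈ J := fun s hs t => hLK _ (K.mul_mem_right t hs)
  clear_value J
  let mk : MvPolynomial (Fin 2) ℝ →ₐ[ℝ] (MvPolynomial (Fin 2) ℝ ⧸ J) := Ideal.Quotient.mkₐ ℝ J
  have hmk0 : ∀ s, mk s = 0 ↔ s ∈ J := fun s => Ideal.Quotient.eq_zero_iff_mem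
  have hmks : Function.Surjective mk := Ideal.Quotient.mkₐ_surjective ℝ J
  clear_value mk
  obtain ⟨L, hL⟩ := factor_dual mk.toLinearMap Lt (by
    intro s hs
    have := (hJ s).1 ((hmk0 s).1 hs) 1
    rwa [mul_one] at this)
  replace hL : ∀ s, L (mk s) = Lt s := hL
  have hLnd : ∀ b, (∀ c, L (b * c) = 0) → b = 0 := by
    intro b hb
    obtain ⟨s, rfl⟩ := hmks b
    rw [hmk0, hJ]
    intro t
    rw [← hL, map_mul]
    exact hb _
  let π : MvPolynomial (Fin 3) ℝ →ₐ[ℝ] (MvPolynomial (Fin 2) ℝ ⧸ J) := mk.comp dz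
  have hπ : ∀ f, π f = mk (dz f) := fun f => rfl
  have hπZ : π (X 2) = 1 := by rw [hπ, dz_Z, map_one]
  have hπp : π p = 0 := by
    rw [hπ, hmk0]; exact hKJ _ (Ideal.subset_span (by simp))
  have hπq : π q = 0 := by
    rw [hπ, hmk0]; exact hKJ _ (Ideal.subset_span (by simp))
  have hπL : ∀ g : MvPolynomial (Fin 3) ℝ, g.IsHomogeneous (D + D) → L (π g) = l g :=
    fun g hg => by rw [hπ, hL, hLt g hg]
  have hnt : Nontrivial (MvPolynomial (Fin 2) ℝ ⧸ J) := by
    obtain ⟨f, hf, hlf⟩ := hne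
    refine ⟨⟨π f, 0, fun h => hlf ?_⟩⟩
    rw [← hπL f hf, h, map_zero]
  have hπs : ∀ b, ∃ n, ∃ f : MvPolynomial (Fin 3) ℝ, f.IsHomogeneous n ∧ π f = b := by
    intro b
    obtain ⟨s, rfl⟩ := hmks b
    obtain ⟨N, hN⟩ := dz_surj s
    obtain ⟨f, hf, e⟩ := hN N le_rfl
    exact ⟨N, f, hf, by rw [hπ, e]⟩
  clear_value π
  let V : ℕ → Submodule ℝ (MvPolynomial (Fin 2) ℝ ⧸ J) :=
    fun n => (homogeneousSubmodule (Fin 3) ℝ n).map π.toLinearMap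
  have hV : ∀ n b, b ∈ V n ↔ ∃ f : MvPolynomial (Fin 3) ℝ, f.IsHomogeneous n ∧ π f = b :=
    fun n b => Iff.rfl
  have hfin : ∀ n, FiniteDimensional ℝ (V n) := by
    intro n
    exact Module.Finite.iff_fg.2 ((homogeneousSubmodule_fg (Fin 3) ℝ n).map _)
  have hV0 : Module.finrank ℝ (V 0) = 1 := by
    have : V 0 = Submodule.span ℝ {1} := by
      ext b
      rw [hV, Submodule.mem_span_singleton]
      constructor
      · rintro ⟨f, hf, rfl⟩
        refine ⟨coeff 0 f, ?_⟩
        have h0 : f = C (coeff 0 f) :=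
          totalDegree_eq_zero_iff_eq_C.1 (Nat.le_zero.1 hf.totalDegree_le)
        conv_rhs => rw [h0, ← algebraMap_eq, AlgHom.commutes, Algebra.algebraMap_eq_smul_one]
      · rintro ⟨c, rfl⟩
        exact ⟨C c, isHomogeneous_C _ _, by
          rw [← algebraMap_eq, AlgHom.commutes, Algebra.algebraMap_eq_smul_one]⟩
    rw [this, finrank_span_singleton one_ne_zero]
  clear_value V
  have key : ∀ f : MvPolynomial (Fin 3) ℝ, f.IsHomogeneous D → π f = 0 →
      hm (π (X 0)) (π (X 1)) D (d1 f) ∈ V (D - 1) := by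
    intro f hf h0
    obtain ⟨g, hg, e⟩ := decomp (n := D - 1) (by rwa [Nat.sub_add_cancel hD])
    rw [Nat.sub_add_cancel hD] at e
    have := congrArg π e
    rw [h0, map_add, map_mul, hπZ, one_mul, map_hm] at this
    rw [eq_neg_of_add_eq_zero_right this.symm]
    exact (V _).neg_mem ((hV _ _).2 ⟨g, hg, rfl⟩)
  obtain ⟨hB, hlt⟩ := hilbert (π (X 0)) (π (X 1)) V hfin hV0
    (by
      intro n b hb
      obtain ⟨f, hf, rfl⟩ := (hV _ _).1 hb
      exact (hV _ _).2 ⟨f * X 2, hf.mul (isHomogeneous_X _ _), by rw [map_mul, hπZ, mul_one]⟩)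
    (by
      intro m n a ha b hb
      obtain ⟨f, hf, rfl⟩ := (hV _ _).1 ha
      obtain ⟨g, hg, rfl⟩ := (hV _ _).1 hb
      exact (hV _ _).2 ⟨f * g, hf.mul hg, map_mul _ _ _⟩)
    (by
      intro n c
      exact (hV _ _).2 ⟨_, hm_homog n c, map_hm _ _ _ _ _⟩)
    (by
      intro n v hv
      obtain ⟨f, hf, rfl⟩ := (hV _ _).1 hv
      obtain ⟨g, hg, e⟩ := decomp hf
      refine ⟨π g, (hV _ _).2 ⟨g, hg, rfl⟩, d1 f, d1_natDegree hf, ?_⟩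
      have := congrArg π e
      rwa [map_add, map_mul, hπZ, one_mul, map_hm] at this)
    (by
      intro b
      obtain ⟨n, f, hf, e⟩ := hπs b
      exact ⟨n, (hV _ _).2 ⟨f, hf, e⟩⟩)
    (d1 p) (d1 q) D hp1 hD (d1_natDegree hq) hpq (key p hp hπp) (key q hq hπq)
  obtain ⟨i, hi⟩ := exists_sq_neg_one (B := MvPolynomial (Fin 2) ℝ ⧸ J) (by
    intro χ
    let v : Fin 3 → ℝ := fun j => χ (π (X j))
    have h1 : eval v p = χ (π p) := by
      rw [← MvPolynomial.coe_aeval_eq_eval]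
      show aeval v p = (χ.comp π) p
      congr 1
      ext j
      simp [v]
    have h2 := hpos v (by
      intro h
      have := congrFun h 2
      simp [v, hπZ] at this)
    rw [h1, hπp, map_zero] at h2
    exact lt_irrefl _ h2)
  have := dim_bound i hi L hLnd (V D) (by
    intro v hv
    obtain ⟨f, hf, rfl⟩ := (hV _ _).1 hv
    rw [← map_mul, hπL _ (hf.mul hf)]
    exact hl f hf)
  omega


lemma span_prod (l : MvPolynomial (Fin 3) ℝ →ₗ[ℝ] ℝ) (D : ℕ)
    (h : ∀ f g : MvPolynomial (Fin 3) ℝ, f.IsHomogeneous D → g.IsHomogeneous D → l (f * g) = 0)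
    (k : MvPolynomial (Fin 3) ℝ) (hk : k.IsHomogeneous (D + D)) : l k = 0 := by
  have hk' : k ∈ homogeneousSubmodule (Fin 3) ℝ (D + D) := hk
  rw [← homogeneousSubmodule_one_pow, pow_add, homogeneousSubmodule_one_pow] at hk'
  induction hk' using Submodule.mul_induction_on' with
  | mem_mul_mem m hm n hn => exact h m n hm hn
  | add x hx y hy h1 h2 =>
    have key : ∀ z ∈ homogeneousSubmodule (Fin 3) ℝ D * homogeneousSubmodule (Fin 3) ℝ D,
        z.IsHomogeneous (D + D) := by
      intro z hz
      exact homogeneousSubmodule_mul D D hz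
    rw [map_add, h1 (key x hx), h2 (key y hy), add_zero]

/-- The bilinear form `(f, g) ↦ l (f * g)` on forms of degree `D`. -/
noncomputable def bl (D : ℕ) (l : MvPolynomial (Fin 3) ℝ →ₗ[ℝ] ℝ) :
    homogeneousSubmodule (Fin 3) ℝ D →ₗ[ℝ] homogeneousSubmodule (Fin 3) ℝ D →ₗ[ℝ] ℝ :=
  ((LinearMap.mul ℝ (MvPolynomial (Fin 3) ℝ)).compr₂ l).compl₁₂
    (homogeneousSubmodule (Fin 3) ℝ D).subtype (homogeneousSubmodule (Fin 3) ℝ D).subtype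

lemma bl_apply (D : ℕ) (l : MvPolynomial (Fin 3) ℝ →ₗ[ℝ] ℝ)
    (f g : homogeneousSubmodule (Fin 3) ℝ D) : bl D l f g = l (f.1 * g.1) := rfl

/-- The functionals under consideration. -/
def Good (D : ℕ) (p : MvPolynomial (Fin 3) ℝ) (l : MvPolynomial (Fin 3) ℝ →ₗ[ℝ] ℝ) : Prop :=
  (∀ f : MvPolynomial (Fin 3) ℝ, f.IsHomogeneous D → 0 ≤ l (f * f)) ∧ l (p * p) = 0 ∧
    ∃ f : MvPolynomial (Fin 3) ℝ, f.IsHomogeneous (D + D) ∧ l f ≠ 0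

lemma bl_symm (D : ℕ) (l : MvPolynomial (Fin 3) ℝ →ₗ[ℝ] ℝ)
    (f g : homogeneousSubmodule (Fin 3) ℝ D) : bl D l f g = bl D l g f := by
  rw [bl_apply, bl_apply, mul_comm]

lemma good_p {D : ℕ} {p : MvPolynomial (Fin 3) ℝ} (hp : p.IsHomogeneous D)
    {l : MvPolynomial (Fin 3) ℝ →ₗ[ℝ] ℝ} (h : Good D p l) :
    (⟨p, hp⟩ : homogeneousSubmodule (Fin 3) ℝ D) ∈ LinearMap.ker (bl D l) := by
  rw [LinearMap.mem_ker]
  ext w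
  exact psd_radical (bl D l) (bl_symm D l) ⊤ (fun v _ => h.1 v.1 v.2) ⟨p, hp⟩ trivial h.2.1 w trivial

lemma exists_max {D : ℕ} {p : MvPolynomial (Fin 3) ℝ} (hp : p.IsHomogeneous D)
    {l₀ : MvPolynomial (Fin 3) ℝ →ₗ[ℝ] ℝ} (h₀ : Good D p l₀) :
    ∃ l, Good D p l ∧ ∀ l' : MvPolynomial (Fin 3) ℝ →ₗ[ℝ] ℝ,
      LinearMap.ker (bl D l) ≤ LinearMap.ker (bl D l') →
      ∃ c : ℝ, ∀ h : MvPolynomial (Fin 3) ℝ, h.IsHomogeneous (D + D) → l' h = c * l h := by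
  have hfd : FiniteDimensional ℝ (homogeneousSubmodule (Fin 3) ℝ D) :=
    Module.Finite.iff_fg.2 (homogeneousSubmodule_fg (Fin 3) ℝ D)
  obtain ⟨W, ⟨l, hl, rfl⟩, hmax⟩ := WellFounded.has_min
    (wellFounded_gt (α := Submodule ℝ (homogeneousSubmodule (Fin 3) ℝ D)))
    {W | ∃ l, Good D p l ∧ LinearMap.ker (bl D l) = W} ⟨_, l₀, h₀, rfl⟩
  refine ⟨l, hl, fun l' hker => ?_⟩
  have hb : bl D l ≠ 0 := by
    intro h0
    obtain ⟨f, hf, hlf⟩ := hl.2.2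
    refine hlf (span_prod l D (fun f g hf hg => ?_) f hf)
    have := DFunLike.congr_fun (DFunLike.congr_fun h0 ⟨f, hf⟩) ⟨g, hg⟩
    exact this
  obtain ⟨M, hM, u, hu, hMu⟩ := rayleigh (bl D l) (bl D l') (bl_symm D l) (bl_symm D l')
    (fun u => hl.1 u.1 u.2) hb hker
  by_contra hcon
  push Not at hcon
  obtain ⟨h, hh, hne⟩ := hcon M
  have hp0 := good_p hp hl
  have hbe : ∀ f g, bl D (M • l - l') f g = M * bl D l f g - bl D l' f g := by
    intro f g
    simp only [bl_apply, LinearMap.sub_apply, LinearMap.smul_apply, smul_eq_mul]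
  have hg : Good D p (M • l - l') := by
    refine ⟨fun f hf => ?_, ?_, h, hh, ?_⟩
    · have h1 := hM ⟨f, hf⟩
      have h2 := hbe ⟨f, hf⟩ ⟨f, hf⟩
      rw [bl_apply] at h2
      simp only at h2
      rw [h2]
      linarith
    · have h2 := hbe ⟨p, hp⟩ ⟨p, hp⟩
      rw [LinearMap.mem_ker.1 hp0, LinearMap.mem_ker.1 (hker hp0)] at h2
      simpa [bl_apply] using h2
    · simp only [LinearMap.sub_apply, LinearMap.smul_apply, smul_eq_mul]
      intro h0
      exact hne (by linarith)
  refine hmax _ ⟨_, hg, rfl⟩ ?_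
  refine lt_of_le_of_ne ?_ ?_
  · intro f hf
    rw [LinearMap.mem_ker]
    ext g
    rw [hbe, LinearMap.mem_ker.1 hf, LinearMap.mem_ker.1 (hker hf)]
    simp
  · intro heq
    apply hu
    rw [← LinearMap.mem_ker, heq, LinearMap.mem_ker]
    ext g
    exact psd_radical (bl D (M • l - l')) (bl_symm D _) ⊤ (fun v _ => hg.1 v.1 v.2) u trivial
      (by rw [hbe, hMu, sub_self]) g trivial

lemma d1_aeval (ζ : ℂ) (f : MvPolynomial (Fin 3) ℝ) :
    Polynomial.aeval ζ (d1 f) = aeval ![ζ, 1, 0] f := by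
  rw [d1, ← AlgHom.comp_apply]
  congr 1
  ext i
  fin_cases i <;> simp

lemma d1_deg_eq {p : MvPolynomial (Fin 3) ℝ} {D : ℕ} (hD : 1 ≤ D) (hp : p.IsHomogeneous D)
    (hpos : ∀ x : Fin 3 → ℝ, x ≠ 0 → 0 < eval x p) : (d1 p).natDegree = D := by
  by_contra hne
  have hlt : (d1 p).natDegree ≤ D - 1 := by
    have := d1_natDegree hp
    omega
  obtain ⟨g, hg, e⟩ := decomp (n := D - 1) (by rwa [Nat.sub_add_cancel hD])
  have h1 := hm_mul (X 0 : MvPolynomial (Fin 3) ℝ) (X 1) (D - 1) 1 (d1 p) 1 hlt (by simp)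
  rw [mul_one, hm_one, pow_one] at h1
  rw [h1] at e
  have h2 := hpos ![1, 0, 0] (fun h => by simpa using congrFun h 0)
  rw [e] at h2
  simp at h2

lemma core {p : MvPolynomial (Fin 3) ℝ} {D : ℕ} (hD : 1 ≤ D) (hp : p.IsHomogeneous D)
    (hpos : ∀ x : Fin 3 → ℝ, x ≠ 0 → 0 < eval x p)
    {l₀ : MvPolynomial (Fin 3) ℝ →ₗ[ℝ] ℝ} (h₀ : Good D p l₀) : False := by
  obtain ⟨l, hl, hmax⟩ := exists_max hp h₀
  have hp1 := d1_deg_eq hD hp hpos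
  have hp0 : d1 p ≠ 0 := by intro h; rw [h] at hp1; simp at hp1; omega
  have hpW := good_p hp hl
  let W := LinearMap.ker (bl D l)
  let ev : ℂ → MvPolynomial (Fin 3) ℝ →ₐ[ℝ] ℂ := fun ζ => aeval ![ζ, 1, 0]
  have hroot : ∀ ζ : ℂ, Polynomial.aeval ζ (d1 p) = 0 → ∃ w ∈ W, ev ζ w.1 ≠ 0 := by
    intro ζ hζ
    by_contra hcon
    push Not at hcon
    have him : ζ.im ≠ 0 := by
      intro him
      have hz : ζ = algebraMap ℝ ℂ ζ.re := by
        apply Complex.ext <;> simp [him]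
      have hv : (![ζ, 1, 0] : Fin 3 → ℂ) = algebraMap ℝ ℂ ∘ ![ζ.re, 1, 0] := by
        ext i
        fin_cases i
        · simpa using hz
        · simp
        · simp
      have h2 := hpos ![ζ.re, 1, 0] (fun h => by simpa using congrFun h 1)
      rw [d1_aeval, hv, MvPolynomial.aeval_algebraMap_apply] at hζ
      rw [← MvPolynomial.coe_aeval_eq_eval] at h2
      have h3 : aeval ![ζ.re, 1, 0] p = 0 := by
        simpa using hζ
      rw [RingHom.coe_coe, h3] at h2
      exact lt_irrefl _ h2
    have hk : ∀ r : ℂ →ₗ[ℝ] ℝ,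
        LinearMap.ker (bl D l) ≤ LinearMap.ker (bl D (r.comp (ev ζ).toLinearMap)) := by
      intro r f hf
      rw [LinearMap.mem_ker]
      ext g
      rw [bl_apply]
      simp [hcon f hf]
    obtain ⟨c, hc⟩ := hmax _ (hk Complex.reLm)
    obtain ⟨c', hc'⟩ := hmax _ (hk Complex.imLm)
    have hy : (X 1 ^ (D + D) : MvPolynomial (Fin 3) ℝ).IsHomogeneous (D + D) :=
      isHomogeneous_X_pow _ _
    have hx : (X 0 * X 1 ^ (D + D - 1) : MvPolynomial (Fin 3) ℝ).IsHomogeneous (D + D) := by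
      have := (isHomogeneous_X ℝ (0 : Fin 3)).mul
        (isHomogeneous_X_pow (R := ℝ) (1 : Fin 3) (D + D - 1))
      rwa [show 1 + (D + D - 1) = D + D by omega] at this
    have h1 := hc _ hy
    have h2 := hc' _ hy
    have h3 := hc' _ hx
    simp [ev] at h1 h2 h3
    rcases h2 with h2 | h2
    · rw [h2, zero_mul] at h3
      exact him h3
    · rw [h2, mul_zero] at h1
      exact one_ne_zero h1
  obtain ⟨q, hqW, hq⟩ : ∃ q ∈ W, ∀ ζ : ℂ, Polynomial.aeval ζ (d1 p) = 0 → ev ζ q.1 ≠ 0 := by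
    let F : {ζ : ℂ // ζ ∈ (d1 p).rootSet ℂ} → Subspace ℝ W := fun ζ =>
      LinearMap.ker (((ev ζ.1).toLinearMap.comp (homogeneousSubmodule (Fin 3) ℝ D).subtype).comp
        W.subtype)
    have hfin : Finite {ζ : ℂ // ζ ∈ (d1 p).rootSet ℂ} := (Polynomial.rootSet_finite _ _).to_subtype
    by_contra hcon
    push Not at hcon
    obtain ⟨ζ, hζ⟩ := Subspace.exists_eq_top_of_iUnion_eq_univ (p := F) (by
      rw [Set.eq_univ_iff_forall]
      intro w
      obtain ⟨ζ, h1, h2⟩ := hcon w.1 w.2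
      rw [Set.mem_iUnion]
      exact ⟨⟨ζ, (Polynomial.mem_rootSet).2 ⟨hp0, h1⟩⟩, h2⟩)
    obtain ⟨w, hw, hne⟩ := hroot ζ.1 (Polynomial.mem_rootSet.1 ζ.2).2
    have : (⟨w, hw⟩ : W) ∈ F ζ := hζ ▸ trivial
    exact hne this
  have hpq : IsCoprime (d1 p) (d1 q.1) := by
    refine (Polynomial.isCoprime_iff_aeval_ne_zero_of_isAlgClosed (k := ℝ) ℂ _ _).2 ?_
    intro ζ
    by_cases h : Polynomial.aeval ζ (d1 p) = 0
    · right
      rw [d1_aeval]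
      exact hq ζ h
    · exact Or.inl h
  have hker : ∀ w : homogeneousSubmodule (Fin 3) ℝ D, w ∈ LinearMap.ker (bl D l) →
      ∀ f : MvPolynomial (Fin 3) ℝ, f.IsHomogeneous D → l (f * w.1) = 0 := by
    intro w hw f hf
    have h1 : bl D l ⟨f, hf⟩ w = 0 := by
      rw [bl_symm, LinearMap.mem_ker.1 hw, LinearMap.zero_apply]
    rwa [bl_apply] at h1
  refine final_contra hp q.2 hD hp1 hpq hpos l hl.1 (fun f hf => ?_) (fun f hf => ?_) hl.2.2
  · exact hker ⟨p, hp⟩ hpW f hf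
  · exact hker q hqW f hf

theorem stmt_7 (d : ℕ) (hd : 1 ≤ d) (p : MvPolynomial (Fin 3) ℝ)
    (hp : p.IsHomogeneous (2 * d))
    (hpos : ∀ x : Fin 3 → ℝ, x ≠ 0 → 0 < eval x p)
    (l : MvPolynomial (Fin 3) ℝ →ₗ[ℝ] ℝ)
    (hl : ∀ f : MvPolynomial (Fin 3) ℝ, f.IsHomogeneous (2 * d) → 0 ≤ l (f ^ 2))
    (hne : ∃ f : MvPolynomial (Fin 3) ℝ, f.IsHomogeneous (4 * d) ∧ l f ≠ 0) :
    0 < l (p ^ 2) := by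
  refine lt_of_le_of_ne (hl p hp) fun h0 => ?_
  refine core (D := 2 * d) (by omega) hp hpos (l₀ := l) ⟨fun f hf => ?_, ?_, ?_⟩
  · rw [← sq]; exact hl f hf
  · rw [← sq]; exact h0.symm
  · rwa [show 2 * d + 2 * d = 4 * d by ring]
end

section
/- Hilbert's multiplier theorem: for every nonnegative ternary form p of degree 2d (d >= 2), there exists a nonnegative form q of degree 2d - 4 in 3 variables such that the product pq is a sum of squares of forms of degree 2d - 2. -/
open MvPolynomial

open Matrix MatrixOrder in
lemma hm_psd_factor {n : ℕ} {M : Matrix (Fin n) (Fin n) ℝ} (hM : M.PosSemidef) :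
    ∃ A : Matrix (Fin n) (Fin n) ℝ, M = Aᵀ * A := by
  have h : ∃ A : Matrix (Fin n) (Fin n) ℝ, M = Aᴴ * A := by
    have := (Matrix.nonneg_iff_posSemidef (A := M)).2 hM
    exact CStarAlgebra.nonneg_iff_eq_star_mul_self.1 this
  obtain ⟨A, hA⟩ := h
  exact ⟨A, by rw [hA, conjTranspose_eq_transpose_of_trivial]⟩

open Matrix in
lemma hm_sep0 {n k : ℕ} (b : Fin n → Fin n → (Fin k → ℝ))
    (H : ∀ A : Matrix (Fin n) (Fin n) ℝ, ∑ i, ∑ j, (Aᵀ * A) i j • b i j = 0 → A = 0) :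
    ∃ l : (Fin k → ℝ) →ₗ[ℝ] ℝ, ∀ v : Fin n → ℝ, v ≠ 0 →
      0 < ∑ i, ∑ j, v i * v j * l (b i j) := by
  set Φ : Matrix (Fin n) (Fin n) ℝ → (Fin k → ℝ) := fun M => ∑ i, ∑ j, M i j • b i j with hΦ
  set D : Set (Matrix (Fin n) (Fin n) ℝ) := {M | M.PosSemidef ∧ M.trace = 1} with hD
  have hDcpt : IsCompact (Φ '' D) := by
    have hS : IsCompact {A : Fin n → Fin n → ℝ | ∑ i, ∑ j, A i j ^ 2 = 1} := by
      apply Metric.isCompact_of_isClosed_isBounded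
      · exact isClosed_eq (by fun_prop) (by fun_prop)
      · refine (Metric.isBounded_closedBall (x := (0 : Fin n → Fin n → ℝ)) (r := 1)).subset ?_
        intro A hA
        simp only [Set.mem_ofPred_eq] at hA
        rw [mem_closedBall_zero_iff, pi_norm_le_iff_of_nonneg zero_le_one]
        intro i
        rw [pi_norm_le_iff_of_nonneg zero_le_one]
        intro j
        have h1 : A i j ^ 2 ≤ ∑ j, A i j ^ 2 :=
          Finset.single_le_sum (f := fun j => A i j ^ 2) (fun _ _ => sq_nonneg _) (Finset.mem_univ j)
        have h2 : ∑ j, A i j ^ 2 ≤ ∑ i, ∑ j, A i j ^ 2 :=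
          Finset.single_le_sum (f := fun i => ∑ j, A i j ^ 2)
            (fun _ _ => Finset.sum_nonneg fun _ _ => sq_nonneg _) (Finset.mem_univ i)
        rw [Real.norm_eq_abs]
        exact abs_le_one_iff_mul_self_le_one.2 (by nlinarith)
    have : Φ '' D = (fun A : Fin n → Fin n → ℝ => ∑ i, ∑ j, (∑ l, A l i * A l j) • b i j) ''
        {A : Fin n → Fin n → ℝ | ∑ i, ∑ j, A i j ^ 2 = 1} := by
      have key : ∀ A : Matrix (Fin n) (Fin n) ℝ, (Aᵀ * A).trace = ∑ i, ∑ j, A i j ^ 2 := by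
        intro A
        rw [Finset.sum_comm]
        simp [Matrix.trace, Matrix.mul_apply, sq]
      ext y
      constructor
      · rintro ⟨M, ⟨hM, ht⟩, rfl⟩
        obtain ⟨A, rfl⟩ := hm_psd_factor hM
        exact ⟨A, by rw [key] at ht; exact ht, by simp [hΦ, Matrix.mul_apply]⟩
      · rintro ⟨A, hA, rfl⟩
        refine ⟨(Matrix.of A)ᵀ * (Matrix.of A), ⟨?_, ?_⟩, by simp [hΦ, Matrix.mul_apply]⟩
        · have := posSemidef_conjTranspose_mul_self (Matrix.of A)
          rwa [conjTranspose_eq_transpose_of_trivial] at this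
        · rw [key]; exact hA
    rw [this]
    apply hS.image
    fun_prop
  have hconv : Convex ℝ (Φ '' D) := by
    have hDc : Convex ℝ D := by
      rintro M ⟨hM, hMt⟩ N ⟨hN, hNt⟩ a c ha hc hac
      refine ⟨(hM.smul ha).add (hN.smul hc), ?_⟩
      rw [Matrix.trace_add, Matrix.trace_smul, Matrix.trace_smul, hMt, hNt]
      simpa using hac
    have hlin : IsLinearMap ℝ Φ := by
      constructor
      · intro M N; simp [hΦ, add_smul, Finset.sum_add_distrib]
      · intro c M; simp [hΦ, Finset.smul_sum, mul_smul]
    exact hDc.is_linear_image hlin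
  have h0 : (0 : Fin k → ℝ) ∉ Φ '' D := by
    rintro ⟨M, ⟨hM, ht⟩, h⟩
    obtain ⟨A, rfl⟩ := hm_psd_factor hM
    rw [H A h] at ht
    simp at ht
  obtain ⟨f, u, hfu, hf⟩ := geometric_hahn_banach_point_closed hconv hDcpt.isClosed h0
  refine ⟨f.toLinearMap, fun v hv => ?_⟩
  have hvv : 0 < ∑ i, v i * v i := by
    obtain ⟨i, hi⟩ : ∃ i, v i ≠ 0 := by
      by_contra! h; exact hv (funext h)
    exact Finset.sum_pos' (fun _ _ => mul_self_nonneg _) ⟨i, Finset.mem_univ i, mul_self_pos.2 hi⟩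
  have hm := hf (Φ ((∑ i, v i * v i)⁻¹ • vecMulVec v v)) ⟨_, ⟨?_, ?_⟩, rfl⟩
  · rw [map_zero] at hfu
    have h1 := hfu.trans hm
    have : f (Φ ((∑ i, v i * v i)⁻¹ • vecMulVec v v)) =
      (∑ i, v i * v i)⁻¹ * ∑ i, ∑ j, v i * v j * f (b i j) := by
      simp [hΦ, map_sum, vecMulVec_apply, Finset.mul_sum, mul_assoc]
    rw [this] at h1
    exact (mul_pos_iff_of_pos_left (inv_pos.2 hvv)).1 h1
  · refine Matrix.PosSemidef.smul ?_ (inv_nonneg.2 hvv.le)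
    simpa using posSemidef_vecMulVec_self_star v
  · rw [Matrix.trace_smul]
    simp only [Matrix.trace, Matrix.diag, vecMulVec_apply, smul_eq_mul]
    exact inv_mul_cancel₀ hvv.ne'

/-- Separation: if no nontrivial sum `∑ B(g_i,g_i)` lies in `L`, there is a functional
vanishing on `L` and strictly positive on all `B(g,g)`. -/
lemma hm_sep {E F : Type*} [AddCommGroup E] [Module ℝ E] [FiniteDimensional ℝ E]
    [AddCommGroup F] [Module ℝ F] (B : E →ₗ[ℝ] E →ₗ[ℝ] F) (L : Submodule ℝ F)
    (H : ∀ (k : ℕ) (g : Fin k → E), ∑ i, B (g i) (g i) ∈ L → ∀ i, g i = 0) :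
    ∃ l : F →ₗ[ℝ] ℝ, (∀ x ∈ L, l x = 0) ∧ ∀ g : E, g ≠ 0 → 0 < l (B g g) := by
  let e := Module.finBasis ℝ E
  set n := Module.finrank ℝ E
  let W : Submodule ℝ (F ⧸ L) := Submodule.span ℝ
    (Set.range fun ij : Fin n × Fin n => L.mkQ (B (e ij.1) (e ij.2)))
  have : FiniteDimensional ℝ W := FiniteDimensional.span_of_finite ℝ (Set.finite_range _)
  let w := Module.finBasis ℝ W
  let b0 : Fin n → Fin n → W := fun i j => ⟨L.mkQ (B (e i) (e j)), Submodule.subset_span ⟨(i, j), rfl⟩⟩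
  have hBg : ∀ g : E, B g g = ∑ i, ∑ j, (e.repr g i * e.repr g j) • B (e i) (e j) := by
    intro g
    conv_lhs => rw [← e.sum_repr g]
    simp only [map_sum, map_smul, LinearMap.sum_apply, LinearMap.smul_apply, Finset.smul_sum,
      mul_smul]
    rw [Finset.sum_comm]
    refine Finset.sum_congr rfl fun i _ => Finset.sum_congr rfl fun j _ => ?_
    rw [smul_comm]
  obtain ⟨l, hl⟩ := hm_sep0 (fun i j => w.equivFun (b0 i j)) (by
    intro A hA
    have h1 : ∑ i, ∑ j, (A.transpose * A) i j • b0 i j = 0 := by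
      apply w.equivFun.injective
      simpa [map_sum] using hA
    have h2 : ∑ i, ∑ j, (A.transpose * A) i j • L.mkQ (B (e i) (e j)) = 0 := by
      have := congrArg W.subtype h1
      simpa [map_sum, b0] using this
    have h3 : ∑ k, B (e.equivFun.symm (A k)) (e.equivFun.symm (A k)) ∈ L := by
      rw [← Submodule.ker_mkQ L, LinearMap.mem_ker, ← h2, map_sum]
      have : ∀ k, L.mkQ (B (e.equivFun.symm (A k)) (e.equivFun.symm (A k))) =
          ∑ i, ∑ j, (A k i * A k j) • L.mkQ (B (e i) (e j)) := by
        intro k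
        rw [hBg, map_sum]
        refine Finset.sum_congr rfl fun i _ => ?_
        rw [map_sum]
        refine Finset.sum_congr rfl fun j _ => ?_
        rw [map_smul]
        congr 1
        have hr : ∀ i, e.repr (e.equivFun.symm (A k)) i = A k i := by
          intro i
          rw [← e.equivFun_apply, LinearEquiv.apply_symm_apply]
        rw [hr, hr]
      simp_rw [this, Matrix.mul_apply, Finset.sum_smul, Matrix.transpose_apply]
      rw [Finset.sum_comm]
      refine Finset.sum_congr rfl fun i _ => ?_
      rw [Finset.sum_comm]
    have h4 := H n _ h3
    ext i j
    have := (LinearEquiv.map_eq_zero_iff _).1 (h4 i)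
    rw [this]; rfl)
  obtain ⟨l', hl'⟩ := LinearMap.exists_extend (p := W) (l ∘ₗ w.equivFun.toLinearMap)
  refine ⟨l' ∘ₗ L.mkQ, fun x hx => ?_, fun g hg => ?_⟩
  · have : L.mkQ x = 0 := by rwa [← LinearMap.mem_ker, Submodule.ker_mkQ]
    rw [LinearMap.comp_apply, this, map_zero]
  · have hlb : ∀ i j, l' (L.mkQ (B (e i) (e j))) = l (w.equivFun (b0 i j)) := by
      intro i j
      exact congrArg (fun φ : W →ₗ[ℝ] ℝ => φ (b0 i j)) hl'
    have := hl (fun i => e.repr g i) (by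
      intro h
      apply hg
      apply e.repr.injective
      ext i
      simpa using congrFun h i)
    rw [hBg]
    simp only [LinearMap.comp_apply, map_sum, map_smul, smul_eq_mul, hlb]
    exact this

/-- maximise a quadratic form relative to a positive definite one -/
lemma hm_critical {E : Type*} [AddCommGroup E] [Module ℝ E] [FiniteDimensional ℝ E]
    (P Q : E →ₗ[ℝ] E →ₗ[ℝ] ℝ) (hP : ∀ x y, P x y = P y x) (hQ : ∀ x y, Q x y = Q y x)
    (hpos : ∀ g, g ≠ 0 → 0 < P g g) (g₀ : E) (hg₀ : 0 < Q g₀ g₀) :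
    ∃ t : ℝ, 0 < t ∧ ∃ f : E, f ≠ 0 ∧ ∀ g, P f g - t * Q f g = 0 := by
  let e := (Module.finBasis ℝ E).equivFun
  set n := Module.finrank ℝ E
  have hcont : ∀ R : E →ₗ[ℝ] E →ₗ[ℝ] ℝ, Continuous fun v : Fin n → ℝ => R (e.symm v) (e.symm v) := by
    intro R
    have h1 : ∀ v : Fin n → ℝ, R (e.symm v) (e.symm v) = ∑ i, ∑ j, v i * v j *
        R (e.symm (Pi.single i 1)) (e.symm (Pi.single j 1)) := by
      intro v
      have : e.symm v = ∑ i, v i • e.symm (Pi.single i 1) := by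
        simp_rw [← map_smul, ← map_sum]
        congr 1
        ext i
        simp [Finset.sum_apply, Pi.single_apply]
      conv_lhs => rw [this]
      simp only [map_sum, map_smul, LinearMap.sum_apply, LinearMap.smul_apply, smul_eq_mul,
        Finset.mul_sum]
      rw [Finset.sum_comm]
      refine Finset.sum_congr rfl fun i _ => Finset.sum_congr rfl fun j _ => ?_
      ring
    simp_rw [h1]
    fun_prop
  have hne : ∀ v ∈ Metric.sphere (0 : Fin n → ℝ) 1, e.symm v ≠ 0 := by
    intro v hv h
    rw [LinearEquiv.map_eq_zero_iff] at h
    simp [h] at hv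
  have hg₀' : g₀ ≠ 0 := by rintro rfl; simp at hg₀
  have heg : e g₀ ≠ 0 := by simpa using hg₀'
  have hmem : (‖e g₀‖⁻¹ • e g₀) ∈ Metric.sphere (0 : Fin n → ℝ) 1 := by
    simp [norm_smul, inv_mul_cancel₀ (norm_ne_zero_iff.2 heg)]
  obtain ⟨v, hv, hmax⟩ := (isCompact_sphere (0 : Fin n → ℝ) 1).exists_isMaxOn ⟨_, hmem⟩
    (f := fun v => Q (e.symm v) (e.symm v) / P (e.symm v) (e.symm v))
    (ContinuousOn.div (hcont Q).continuousOn (hcont P).continuousOn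
      (fun v hv => (hpos _ (hne v hv)).ne'))
  set f := e.symm v with hf
  have hfne : f ≠ 0 := hne v hv
  set c := Q f f / P f f with hc
  have hall : ∀ g, Q g g ≤ c * P g g := by
    intro g
    by_cases hg : g = 0
    · simp [hg]
    have heg : e g ≠ 0 := by simpa using hg
    have hmem : (‖e g‖⁻¹ • e g) ∈ Metric.sphere (0 : Fin n → ℝ) 1 := by
      simp [norm_smul, inv_mul_cancel₀ (norm_ne_zero_iff.2 heg)]
    have := hmax hmem
    simp only [Set.mem_ofPred_eq, map_smul, LinearEquiv.symm_apply_apply, LinearMap.smul_apply,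
      smul_eq_mul] at this
    have hn : ‖e g‖⁻¹ ≠ 0 := inv_ne_zero (norm_ne_zero_iff.2 heg)
    rw [mul_div_mul_left _ _ hn, mul_div_mul_left _ _ hn, div_le_iff₀ (hpos g hg)] at this
    exact this
  have hcpos : 0 < c := by
    have h1 := hall g₀
    have h2 := hpos g₀ hg₀'
    by_contra hcon
    push Not at hcon
    nlinarith
  refine ⟨c⁻¹, inv_pos.2 hcpos, f, hfne, fun g => ?_⟩
  have hPf := hpos f hfne
  have hzero : c * P f f - Q f f = 0 := by rw [hc]; field_simp; ring
  have hq : ∀ s : ℝ, 0 ≤ s * (2 * (c * P f g - Q f g)) + s ^ 2 * (c * P g g - Q g g) := by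
    intro s
    have := hall (f + s • g)
    simp only [map_add, map_smul, LinearMap.add_apply, LinearMap.smul_apply, smul_eq_mul] at this
    rw [hP g f, hQ g f] at this
    nlinarith
  have hkey : c * P f g - Q f g = 0 := by
    set A := c * P f g - Q f g
    set D := c * P g g - Q g g
    have hD : 0 ≤ D := by have := hall g; simp only [D]; linarith
    by_contra hA
    have := hq (-A / (D + 1))
    have hD1 : 0 < D + 1 := by linarith
    have h2 : -A / (D + 1) * (2 * A) + (-A / (D + 1)) ^ 2 * D =
      - (A ^ 2 * (D + 2)) / (D + 1) ^ 2 := by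
      field_simp; ring
    rw [h2] at this
    have h3 : 0 < A ^ 2 * (D + 2) := by positivity
    have h4 : - (A ^ 2 * (D + 2)) / (D + 1) ^ 2 < 0 := by
      apply div_neg_of_neg_of_pos <;> [linarith; positivity]
    linarith
  field_simp
  linarith

instance hm_fin (k : ℕ) : FiniteDimensional ℝ (homogeneousSubmodule (Fin 3) ℝ k) :=
  Module.Finite.iff_fg.2 (homogeneousSubmodule_fg (Fin 3) ℝ k)

lemma hm_finrank (k : ℕ) :
    Module.finrank ℝ (homogeneousSubmodule (Fin 3) ℝ k) = (k + 2).choose 2 := by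
  have hset : {d : Fin 3 →₀ ℕ | d.degree = k} = ↑((Finset.univ : Finset (Fin 3)).finsuppAntidiag k) := by
    ext d
    simp [Finset.mem_finsuppAntidiag, Finsupp.degree_eq_sum]
  have e : homogeneousSubmodule (Fin 3) ℝ k =
      Submodule.span ℝ ((fun d : Fin 3 →₀ ℕ => (monomial d (1 : ℝ))) '' {d | d.degree = k}) := by
    apply le_antisymm
    · intro p hp
      rw [mem_homogeneousSubmodule] at hp
      rw [p.as_sum]
      refine Submodule.sum_mem _ fun d hd => ?_
      have : monomial d (coeff d p) = coeff d p • monomial d (1 : ℝ) := by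
        rw [smul_monomial]; simp
      rw [this]
      exact Submodule.smul_mem _ _ (Submodule.subset_span
        ⟨d, ((hp.degree_eq_sum_deg_support hd).symm : d.degree = k), rfl⟩)
    · rw [Submodule.span_le]
      rintro _ ⟨d, hd, rfl⟩
      exact isHomogeneous_monomial _ hd
  rw [e, hset]
  have hli : LinearIndependent ℝ (fun d : Fin 3 →₀ ℕ => (monomial d (1 : ℝ))) := by
    have := (basisMonomials (Fin 3) ℝ).linearIndependent
    simpa [coe_basisMonomials] using this
  have h2 := hli.comp (fun d : ((Finset.univ : Finset (Fin 3)).finsuppAntidiag k) => (d : Fin 3 →₀ ℕ))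
    Subtype.val_injective
  have h3 := finrank_span_eq_card h2
  have hr : Set.range (fun d : ((Finset.univ : Finset (Fin 3)).finsuppAntidiag k) =>
      (d : Fin 3 →₀ ℕ)) = ↑((Finset.univ : Finset (Fin 3)).finsuppAntidiag k) := by
    ext d; simp
  rw [Set.range_comp, hr] at h3
  rw [h3]
  rw [Fintype.card_coe, Finset.card_finsuppAntidiag_nat_eq_choose]
  simp only [Finset.card_univ, Fintype.card_fin]
  rw [show 3 + k - 1 = k + 2 by omega]
  exact Nat.choose_symm_add

lemma hm_sqrt_neg_one (A : Type*) [CommRing A] [Algebra ℝ A] [Module.Finite ℝ A]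
    (h : IsEmpty (A →ₐ[ℝ] ℝ)) : ∃ i : A, i * i = -1 := by
  have : IsArtinianRing A := IsArtinianRing.of_finite ℝ A
  have h1 : ∀ m : MaximalSpectrum A, ∃ j : A ⧸ m.asIdeal, j * j = -1 := by
    intro m
    have hm := m.isMaximal
    let : Field (A ⧸ m.asIdeal) := Ideal.Quotient.field _
    have : Algebra.IsAlgebraic ℝ (A ⧸ m.asIdeal) := inferInstance
    rcases Real.nonempty_algEquiv_or (A ⧸ m.asIdeal) with ⟨⟨e⟩⟩ | ⟨⟨e⟩⟩
    · exact (h.false (e.toAlgHom.comp (Ideal.Quotient.mkₐ ℝ m.asIdeal))).elim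
    · refine ⟨e.symm Complex.I, ?_⟩
      rw [← map_mul, Complex.I_mul_I, map_neg, map_one]
  choose j hj using h1
  obtain ⟨a, ha⟩ := Ideal.Quotient.mk_surjective ((IsArtinianRing.quotNilradicalEquivPi A).symm j)
  have hjj : j * j = -1 := by ext m; exact hj m
  have ha2 : Ideal.Quotient.mk (nilradical A) (a ^ 2 + 1) = 0 := by
    rw [map_add, map_pow, map_one, ha, sq, ← map_mul, hjj, map_neg, map_one]
    simp
  have hnil : IsNilpotent (a ^ 2 + 1) := by
    rw [Ideal.Quotient.eq_zero_iff_mem] at ha2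
    exact ha2
  have hunit : IsUnit a := by
    have : IsUnit (-1 + (a ^ 2 + 1)) := by
      exact hnil.isUnit_add_left_of_commute (isUnit_one.neg) (Commute.all _ _)
    have h3 : -1 + (a ^ 2 + 1) = a * a := by ring
    rw [h3] at this
    exact isUnit_of_mul_isUnit_left this
  obtain ⟨r, ⟨-, hr⟩, -⟩ := Polynomial.existsUnique_nilpotent_sub_and_aeval_eq_zero
    (P := (Polynomial.X ^ 2 + 1 : Polynomial ℝ)) (x := a) (by simpa using hnil) (by
      have h2 : IsUnit (algebraMap ℝ A 2) := (isUnit_iff_ne_zero.2 two_ne_zero).map _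
      have := h2.mul hunit
      have h3 : (algebraMap ℝ A 2) = 2 := map_ofNat _ 2
      rw [h3] at this
      convert this using 1
      simp [one_add_one_eq_two, h3])
  refine ⟨r, ?_⟩
  have : r ^ 2 + 1 = 0 := by simpa using hr
  linear_combination this

lemma hm_component_mul (a b : MvPolynomial (Fin 3) ℝ) :
    homogeneousComponent (a.totalDegree + b.totalDegree) (a * b) =
      homogeneousComponent a.totalDegree a * homogeneousComponent b.totalDegree b := by
  have hab : a * b = ∑ i ∈ Finset.range (a.totalDegree + 1), ∑ j ∈ Finset.range (b.totalDegree + 1),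
      homogeneousComponent i a * homogeneousComponent j b := by
    rw [← Finset.sum_mul_sum, sum_homogeneousComponent, sum_homogeneousComponent]
  rw [hab, map_sum, Finset.sum_eq_single a.totalDegree, map_sum, Finset.sum_eq_single b.totalDegree]
  · rw [homogeneousComponent_of_mem (n := a.totalDegree + b.totalDegree)]
    · simp
    · exact (homogeneousComponent_isHomogeneous _ _).mul (homogeneousComponent_isHomogeneous _ _)
  · intro j hj hne
    rw [homogeneousComponent_of_mem (n := a.totalDegree + j)]
    · rw [if_neg (by omega)]
    · exact (homogeneousComponent_isHomogeneous _ _).mul (homogeneousComponent_isHomogeneous _ _)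
  · intro h; simp at h
  · intro i hi hne
    rw [map_sum]
    refine Finset.sum_eq_zero fun j hj => ?_
    rw [Finset.mem_range] at hi hj
    rw [homogeneousComponent_of_mem (n := i + j)]
    · rw [if_neg (by omega)]
    · exact (homogeneousComponent_isHomogeneous _ _).mul (homogeneousComponent_isHomogeneous _ _)
  · intro h; simp at h

lemma hm_factor {D : ℕ} {p : MvPolynomial (Fin 3) ℝ} (hp : p.IsHomogeneous D) (hp0 : p ≠ 0)
    (hD : 0 < D) (hirr : ¬ Irreducible p) :
    ∃ (a b : ℕ) (p₁ p₂ : MvPolynomial (Fin 3) ℝ), 0 < a ∧ 0 < b ∧ a + b = D ∧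
      p₁.IsHomogeneous a ∧ p₂.IsHomogeneous b ∧ p = p₁ * p₂ := by
  have hnu : ¬ IsUnit p := by
    intro hu
    rw [MvPolynomial.isUnit_iff_eq_C_of_isReduced] at hu
    obtain ⟨r, -, hr⟩ := hu
    have h0 : p.IsHomogeneous 0 := hr ▸ isHomogeneous_C _ _
    exact hD.ne' (hp.inj_right h0 hp0)
  rw [irreducible_iff] at hirr
  push Not at hirr
  obtain ⟨x, y, hxy, hx, hy⟩ := hirr hnu
  have hx0 : x ≠ 0 := by rintro rfl; simp at hxy; exact hp0 hxy
  have hy0 : y ≠ 0 := by rintro rfl; simp at hxy; exact hp0 hxy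
  have pos : ∀ z : MvPolynomial (Fin 3) ℝ, z ≠ 0 → ¬ IsUnit z → 0 < z.totalDegree := by
    intro z hz hzu
    by_contra hcon
    have : z.totalDegree = 0 := by omega
    rw [totalDegree_eq_zero_iff_eq_C] at this
    apply hzu
    rw [this]
    apply IsUnit.map
    rw [isUnit_iff_ne_zero]
    intro h
    rw [h] at this
    exact hz (by simpa using this)
  have hdeg : x.totalDegree + y.totalDegree = D := by
    rw [← totalDegree_mul_of_isDomain hx0 hy0, ← hxy, hp.totalDegree hp0]
  refine ⟨x.totalDegree, y.totalDegree, homogeneousComponent x.totalDegree x,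
    homogeneousComponent y.totalDegree y, pos x hx0 hx, pos y hy0 hy, hdeg,
    homogeneousComponent_isHomogeneous _ _, homogeneousComponent_isHomogeneous _ _, ?_⟩
  rw [← hm_component_mul, ← hxy, hdeg, homogeneousComponent_of_mem hp, if_pos rfl]

lemma hm_comp_mul_left {D : ℕ} {p : MvPolynomial (Fin 3) ℝ} (hp : p.IsHomogeneous D)
    (c : MvPolynomial (Fin 3) ℝ) (k : ℕ) :
    homogeneousComponent (D + k) (p * c) = p * homogeneousComponent k c := by
  have hc : p * c = ∑ i ∈ Finset.range (c.totalDegree + 1), p * homogeneousComponent i c := by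
    rw [← Finset.mul_sum, sum_homogeneousComponent]
  have h1 : ∀ i, homogeneousComponent (D + k) (p * homogeneousComponent i c) =
      if k = i then p * homogeneousComponent i c else 0 := by
    intro i
    rw [homogeneousComponent_of_mem (n := D + i) (hp.mul (homogeneousComponent_isHomogeneous _ _))]
    simp
  rw [hc, map_sum]
  simp_rw [h1]
  rw [Finset.sum_ite_eq]
  split_ifs with h
  · rfl
  · rw [homogeneousComponent_eq_zero, mul_zero]
    simpa using h

lemma hm_comp_mul_lt {D : ℕ} {p : MvPolynomial (Fin 3) ℝ} (hp : p.IsHomogeneous D)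
    (c : MvPolynomial (Fin 3) ℝ) {k : ℕ} (hk : k < D) :
    homogeneousComponent k (p * c) = 0 := by
  have hc : p * c = ∑ i ∈ Finset.range (c.totalDegree + 1), p * homogeneousComponent i c := by
    rw [← Finset.mul_sum, sum_homogeneousComponent]
  rw [hc, map_sum]
  refine Finset.sum_eq_zero fun i _ => ?_
  rw [homogeneousComponent_of_mem (n := D + i) (hp.mul (homogeneousComponent_isHomogeneous _ _)),
    if_neg (by omega)]

lemma hm_choose_identity (M D s : ℕ) :
    (M + D + s + 2).choose 2 + (M + 2).choose 2 =
      (M + s + 2).choose 2 + (M + D + 2).choose 2 + D * s := by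
  have h : ∀ n : ℕ, ((n + 2).choose 2 : ℚ) = (n + 2) * (n + 1) / 2 := by
    intro n
    rw [Nat.cast_choose_two]; push_cast; ring
  have : (((M + D + s + 2).choose 2 + (M + 2).choose 2 : ℕ) : ℚ) =
      ((M + s + 2).choose 2 + (M + D + 2).choose 2 + D * s : ℕ) := by
    push_cast
    rw [h, h, h, h]
    push_cast
    ring
  exact_mod_cast this

lemma hm_dim {D s N : ℕ} {p f : MvPolynomial (Fin 3) ℝ} (hp : p.IsHomogeneous D)
    (hf : f.IsHomogeneous s) (hpp : Prime p) (hpf : ¬ p ∣ f) (hN : D + s ≤ N)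
    {A : Type*} [AddCommGroup A] [Module ℝ A] (Ψ : MvPolynomial (Fin 3) ℝ →ₗ[ℝ] A)
    (hΨp : ∀ q, Ψ (p * q) = 0) (hΨf : ∀ q, Ψ (f * q) = 0) :
    Module.finrank ℝ ((homogeneousSubmodule (Fin 3) ℝ N).map Ψ) ≤ D * s := by
  obtain ⟨M, rfl⟩ : ∃ M, N = M + D + s := ⟨N - D - s, by omega⟩
  let H := homogeneousSubmodule (Fin 3) ℝ
  let T : (H (M + s) × H (M + D)) →ₗ[ℝ] H (M + D + s) :=
    LinearMap.codRestrict _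
      (((LinearMap.mulLeft ℝ p) ∘ₗ (H (M + s)).subtype).coprod
        ((LinearMap.mulLeft ℝ f) ∘ₗ (H (M + D)).subtype)) (by
      rintro ⟨⟨q, hq⟩, ⟨g, hg⟩⟩
      have h1 := hp.mul hq
      have h2 := hf.mul hg
      rw [show D + (M + s) = M + D + s by ring] at h1
      rw [show s + (M + D) = M + D + s by ring] at h2
      exact h1.add h2)
  have hT : ∀ x, (T x : MvPolynomial (Fin 3) ℝ) = p * x.1 + f * x.2 := fun x => rfl
  let U : H M →ₗ[ℝ] (H (M + s) × H (M + D)) :=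
    LinearMap.prod
      (LinearMap.codRestrict _ (-((LinearMap.mulLeft ℝ f) ∘ₗ (H M).subtype)) (by
        rintro ⟨c, hc⟩
        have h2 := (hf.mul hc).neg
        rw [show s + M = M + s by ring] at h2
        exact h2))
      (LinearMap.codRestrict _ ((LinearMap.mulLeft ℝ p) ∘ₗ (H M).subtype) (by
        rintro ⟨c, hc⟩
        have h2 := (hp.mul hc)
        rw [show D + M = M + D by ring] at h2
        exact h2))
  have hker : LinearMap.ker T ≤ LinearMap.range U := by
    rintro ⟨⟨q, hq⟩, ⟨g, hg⟩⟩ hx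
    have h0 : p * q + f * g = 0 := by
      have := congrArg Subtype.val (LinearMap.mem_ker.1 hx)
      rw [hT] at this
      exact this
    have hdvd : p ∣ f * g := ⟨-q, by linear_combination h0⟩
    obtain ⟨c, hc⟩ := (hpp.dvd_or_dvd hdvd).resolve_left hpf
    have hc' : g = p * homogeneousComponent M c := by
      rw [← hm_comp_mul_left hp, ← hc, homogeneousComponent_of_mem hg, if_pos (by ring)]
    refine ⟨⟨homogeneousComponent M c, homogeneousComponent_isHomogeneous _ _⟩, ?_⟩
    have hq' : q = -(f * homogeneousComponent M c) := by
      apply mul_left_cancel₀ hpp.ne_zero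
      rw [hc'] at h0
      linear_combination h0
    apply Prod.ext
    · exact Subtype.ext hq'.symm
    · exact Subtype.ext hc'.symm
  let Ψ' := Ψ.domRestrict (H (M + D + s))
  have hrange : LinearMap.range T ≤ LinearMap.ker Ψ' := by
    rintro _ ⟨x, rfl⟩
    rw [LinearMap.mem_ker]
    change Ψ (T x) = 0
    rw [hT, map_add, hΨp, hΨf, add_zero]
  have e1 := Ψ'.finrank_range_add_finrank_ker
  have e2 := T.finrank_range_add_finrank_ker
  have e3 := Submodule.finrank_mono hrange
  have e4 := Submodule.finrank_mono hker
  have e5 := LinearMap.finrank_range_le U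
  have e6 : (H (M + D + s)).map Ψ = LinearMap.range Ψ' := by
    rw [LinearMap.range_domRestrict]
  change Module.finrank ℝ ((H (M + D + s)).map Ψ) ≤ _
  rw [e6]
  have e7 := hm_choose_identity M D s
  rw [hm_finrank] at e1 e5
  rw [Module.finrank_prod, hm_finrank, hm_finrank] at e2
  omega

/-- homogeneous membership -/
lemma hm_mem_span {D s N : ℕ} {p f g : MvPolynomial (Fin 3) ℝ} (hp : p.IsHomogeneous D)
    (hf : f.IsHomogeneous s) (hg : g.IsHomogeneous N) (hD : D ≤ N) (hs : s ≤ N)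
    (h : g ∈ Ideal.span {p, f}) :
    ∃ a b : MvPolynomial (Fin 3) ℝ, a.IsHomogeneous (N - D) ∧ b.IsHomogeneous (N - s) ∧
      g = p * a + f * b := by
  obtain ⟨a, b, hab⟩ := Ideal.mem_span_pair.1 h
  refine ⟨homogeneousComponent (N - D) a, homogeneousComponent (N - s) b,
    homogeneousComponent_isHomogeneous _ _, homogeneousComponent_isHomogeneous _ _, ?_⟩
  rw [← hm_comp_mul_left hp, ← hm_comp_mul_left hf, show D + (N - D) = N by omega,
    show s + (N - s) = N by omega, ← map_add, mul_comm p, mul_comm f, hab,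
    homogeneousComponent_of_mem hg, if_pos rfl]

lemma hm_comp_mem {D s : ℕ} {p f g : MvPolynomial (Fin 3) ℝ} (hp : p.IsHomogeneous D)
    (hf : f.IsHomogeneous s) (h : g ∈ Ideal.span {p, f}) (k : ℕ) :
    homogeneousComponent k g ∈ Ideal.span {p, f} := by
  have aux : ∀ {E : ℕ} {u : MvPolynomial (Fin 3) ℝ} (hu : u.IsHomogeneous E) (c),
      u ∈ Ideal.span {p, f} → homogeneousComponent k (u * c) ∈ Ideal.span {p, f} := by
    intro E u hu c hm
    by_cases hk : k < E
    · rw [hm_comp_mul_lt hu c hk]; exact zero_mem _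
    · rw [show k = E + (k - E) by omega, hm_comp_mul_left hu]
      exact Ideal.mul_mem_right _ _ hm
  obtain ⟨a, b, rfl⟩ := Ideal.mem_span_pair.1 h
  rw [map_add, mul_comm a, mul_comm b]
  exact add_mem (aux hp _ (Ideal.subset_span (by simp))) (aux hf _ (Ideal.subset_span (by simp)))

lemma hm_nzd {p f r : MvPolynomial (Fin 3) ℝ} {a c : ℝ} {N : ℕ} (hc : c ≠ 0)
    (hr : r ∈ Ideal.span {p, f})
    (hφr : aeval (![C a * X 1, X 1, X 2] : Fin 3 → MvPolynomial (Fin 3) ℝ) r = C c * X 1 ^ N)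
    (hp : eval ![0, 0, 1] p ≠ 0) (g : MvPolynomial (Fin 3) ℝ)
    (hg : (X 0 - C a * X 1) * g ∈ Ideal.span {p, f}) : g ∈ Ideal.span {p, f} := by
  set φ : MvPolynomial (Fin 3) ℝ →ₐ[ℝ] MvPolynomial (Fin 3) ℝ :=
    aeval (![C a * X 1, X 1, X 2] : Fin 3 → MvPolynomial (Fin 3) ℝ) with hφ
  set h : MvPolynomial (Fin 3) ℝ := X 0 - C a * X 1 with hh
  have hφh : φ h = 0 := by simp [hφ, hh]
  have hdiv : ∀ u, h ∣ u - φ u := by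
    intro u
    induction u using MvPolynomial.induction_on with
    | C r => simp [hφ]
    | add u v hu hv =>
      rw [map_add]
      convert dvd_add hu hv using 1
      ring
    | mul_X u i hu =>
      rw [map_mul]
      have : h ∣ X i - φ (X i) := by
        fin_cases i
        · exact ⟨1, by simp [hφ, hh]⟩
        · exact ⟨0, by simp [hφ]⟩
        · exact ⟨0, by simp [hφ]⟩
      have h2 : u * X i - φ u * φ (X i) = (u - φ u) * X i + φ u * (X i - φ (X i)) := by ring
      rw [h2]
      exact dvd_add (hu.mul_right _) (this.mul_left _)
  have hh0 : h ≠ 0 := by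
    intro h0
    have := congrArg (eval ![1, 0, 0]) h0
    simp [hh] at this
  obtain ⟨α, β, hαβ⟩ := Ideal.mem_span_pair.1 hg
  obtain ⟨A, B, hAB⟩ := Ideal.mem_span_pair.1 hr
  have e1 : φ α * φ p + φ β * φ f = 0 := by
    have := congrArg φ hαβ
    simpa [hφh] using this
  have e2 : φ A * φ p + φ B * φ f = C c * X 1 ^ N := by
    have := congrArg φ hAB
    rw [hφr] at this
    simpa using this
  have hφp : eval ![0, 0, 1] (φ p) = eval ![0, 0, 1] p := by
    have : (eval ![0, 0, 1]).comp (φ : MvPolynomial (Fin 3) ℝ →+* _) =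
        (eval ![(0 : ℝ), 0, 1]) := by
      apply MvPolynomial.ringHom_ext
      · intro r; simp [hφ]
      · intro i; fin_cases i <;> simp [hφ]
    exact congrArg (fun ψ : MvPolynomial (Fin 3) ℝ →+* ℝ => ψ p) this
  have hXp : ¬ (X 1 : MvPolynomial (Fin 3) ℝ) ∣ φ p := by
    rintro ⟨u, hu⟩
    apply hp
    rw [← hφp, hu]
    simp
  have hφp0 : φ p ≠ 0 := by
    intro h0
    exact hXp (h0 ▸ dvd_zero _)
  have hdvd : φ p ∣ (X 1 : MvPolynomial (Fin 3) ℝ) ^ N * φ β := by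
    refine ⟨C c⁻¹ * (φ β * φ A - φ α * φ B), ?_⟩
    have hcc : (C c⁻¹ * C c : MvPolynomial (Fin 3) ℝ) = 1 := by
      rw [← C_mul, inv_mul_cancel₀ hc, C_1]
    linear_combination (C c⁻¹ * φ B) * e1 - (C c⁻¹ * φ β) * e2 - (X 1 ^ N * φ β) * hcc
  have hrel : IsRelPrime (φ p) ((X 1 : MvPolynomial (Fin 3) ℝ) ^ N) := by
    apply IsRelPrime.pow_right
    exact ((X_prime (i := (1 : Fin 3)) (R := ℝ)).irreducible.isRelPrime_iff_not_dvd.2 hXp).symm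
  obtain ⟨γ, hγ⟩ := hrel.dvd_of_dvd_mul_left hdvd
  have hα : φ α = - (γ * φ f) := by
    apply mul_right_cancel₀ hφp0
    rw [hγ] at e1
    linear_combination e1
  obtain ⟨α', hα'⟩ := hdiv α
  obtain ⟨β', hβ'⟩ := hdiv β
  obtain ⟨p', hp'⟩ := hdiv p
  obtain ⟨f', hf'⟩ := hdiv f
  rw [Ideal.mem_span_pair]
  refine ⟨α' + γ * f', β' - γ * p', ?_⟩
  apply mul_left_cancel₀ hh0
  rw [← hαβ]
  rw [hα] at hα'
  rw [hγ] at hβ'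
  linear_combination (-p) * hα' - f * hβ' + (-(γ * p)) * hf' + (γ * f) * hp'

lemma hm_exists_nzd {p f : MvPolynomial (Fin 3) ℝ} {D s : ℕ} (hp : p.IsHomogeneous D)
    (hf : f.IsHomogeneous s) (hpp : Prime p) (hpf : ¬ p ∣ f)
    (hp1 : eval ![0, 0, 1] p ≠ 0) :
    ∃ a : ℝ, ∀ g, (X 0 - C a * X 1) * g ∈ Ideal.span {p, f} → g ∈ Ideal.span {p, f} := by
  set I := Ideal.span {p, f} with hI
  have hpI : p ∈ I := Ideal.subset_span (by simp)
  have hfI : f ∈ I := Ideal.subset_span (by simp)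
  set N := D + s + D * s with hN
  let Ψ : MvPolynomial (Fin 3) ℝ →ₗ[ℝ] (MvPolynomial (Fin 3) ℝ ⧸ I) :=
    (Ideal.Quotient.mkₐ ℝ I).toLinearMap
  have hdim := hm_dim hp hf hpp hpf (N := N) (by omega) Ψ
    (fun q => by
      change Ideal.Quotient.mk I _ = 0
      exact Ideal.Quotient.eq_zero_iff_mem.2 (I.mul_mem_right _ hpI))
    (fun q => by
      change Ideal.Quotient.mk I _ = 0
      exact Ideal.Quotient.eq_zero_iff_mem.2 (I.mul_mem_right _ hfI))
  let w : Fin (N + 1) → MvPolynomial (Fin 3) ℝ := fun i => X 0 ^ (i : ℕ) * X 1 ^ (N - i)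
  have hw : ∀ i, w i ∈ homogeneousSubmodule (Fin 3) ℝ N := by
    intro i
    have h1 := ((isHomogeneous_X ℝ (0 : Fin 3)).pow (i : ℕ)).mul
      ((isHomogeneous_X ℝ (1 : Fin 3)).pow (N - i))
    rw [mem_homogeneousSubmodule]
    convert h1 using 1
    omega
  let v : Fin (N + 1) → (homogeneousSubmodule (Fin 3) ℝ N).map Ψ :=
    fun i => ⟨Ψ (w i), Submodule.mem_map_of_mem (hw i)⟩
  have hli : ¬ LinearIndependent ℝ v := by
    intro h
    have := h.fintype_card_le_finrank
    simp at this
    omega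
  rw [Fintype.not_linearIndependent_iff] at hli
  obtain ⟨c, hc, i₀, hi₀⟩ := hli
  let P : Polynomial ℝ := ∑ i : Fin (N + 1), Polynomial.C (c i) * Polynomial.X ^ (i : ℕ)
  have hP : P ≠ 0 := by
    intro h
    apply hi₀
    have h2 := congrArg (fun q => Polynomial.coeff q (i₀ : ℕ)) h
    simpa [P, Polynomial.finsetSum_coeff, Polynomial.coeff_X_pow, Fin.val_inj] using h2
  obtain ⟨a, ha⟩ : ∃ a, Polynomial.eval a P ≠ 0 := by
    by_contra hcon
    push Not at hcon
    exact hP (Polynomial.funext (by simpa using hcon))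
  refine ⟨a, fun g hg => ?_⟩
  let r : MvPolynomial (Fin 3) ℝ := ∑ i, c i • w i
  have hr : r ∈ I := by
    have h3 := congrArg Subtype.val hc
    have h4 : Ψ r = 0 := by
      simp only [r, map_sum, map_smul]
      simpa [v] using h3
    exact Ideal.Quotient.eq_zero_iff_mem.1 h4
  refine hm_nzd (c := Polynomial.eval a P) (N := N) ha hr ?_ hp1 g hg
  simp only [r, w, P, map_sum, map_smul, map_mul, map_pow, aeval_X, Polynomial.eval_finsetSum,
    Polynomial.eval_mul, Polynomial.eval_C, Polynomial.eval_pow, Polynomial.eval_X,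
    Finset.sum_mul]
  refine Finset.sum_congr rfl fun i _ => ?_
  have : (X 1 : MvPolynomial (Fin 3) ℝ) ^ N = X 1 ^ (i : ℕ) * X 1 ^ (N - i) := by
    rw [← pow_add]; congr 1; omega
  rw [this, smul_eq_C_mul]
  simp
  ring

lemma hm_dehom {p f : MvPolynomial (Fin 3) ℝ} {D s : ℕ} (hp : p.IsHomogeneous D)
    (hf : f.IsHomogeneous s) {h : MvPolynomial (Fin 3) ℝ} (hh : h.IsHomogeneous 1)
    (hnzd : ∀ g, h * g ∈ Ideal.span {p, f} → g ∈ Ideal.span {p, f})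
    {g : MvPolynomial (Fin 3) ℝ} {N : ℕ} (hg : g.IsHomogeneous N)
    (hmem : g ∈ Ideal.span {p, f} ⊔ Ideal.span {h - 1}) : g ∈ Ideal.span {p, f} := by
  obtain ⟨x, hx, y, hy, hxy⟩ := Submodule.mem_sup.1 hmem
  obtain ⟨γ, rfl⟩ := Ideal.mem_span_singleton'.1 hy
  set I := Ideal.span {p, f} with hI
  have hcomp : ∀ k, homogeneousComponent k x ∈ I := fun k => hm_comp_mem hp hf hx k
  have hgk : ∀ k, k ≠ N → homogeneousComponent k g = 0 := fun k hk => by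
    rw [homogeneousComponent_of_mem hg]; simp [hk]
  have h0 : 0 ≠ N → homogeneousComponent 0 γ ∈ I := by
    intro h0
    have e := congrArg (homogeneousComponent 0) hxy
    rw [hgk 0 h0, show γ * (h - 1) = h * γ - γ by ring, map_add, map_sub,
      hm_comp_mul_lt hh γ (by norm_num)] at e
    have : homogeneousComponent 0 γ = homogeneousComponent 0 x := by
      linear_combination -e
    rw [this]; exact hcomp 0
  have hstep : ∀ k, k + 1 ≠ N →
      h * homogeneousComponent k γ - homogeneousComponent (k + 1) γ ∈ I := by
    intro k hk
    have e := congrArg (homogeneousComponent (k + 1)) hxy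
    rw [hgk _ hk, show γ * (h - 1) = h * γ - γ by ring, map_add, map_sub] at e
    have e2 := hm_comp_mul_left hh γ k
    rw [add_comm 1 k] at e2
    rw [e2] at e
    have : h * homogeneousComponent k γ - homogeneousComponent (k + 1) γ =
      - homogeneousComponent (k + 1) x := by linear_combination e
    rw [this]; exact I.neg_mem (hcomp _)
  have hup : ∀ k, k < N → homogeneousComponent k γ ∈ I := by
    intro k
    induction k with
    | zero => intro hk; exact h0 (by omega)
    | succ k ih =>
      intro hk
      have h1 := hstep k (by omega)
      have h2 := I.sub_mem (I.mul_mem_left h (ih (by omega))) h1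
      simpa using h2
  have hdown : ∀ j k, N ≤ k → γ.totalDegree < k + j → homogeneousComponent k γ ∈ I := by
    intro j
    induction j with
    | zero =>
      intro k _ hk
      rw [homogeneousComponent_eq_zero _ _ (by simpa using hk)]; exact I.zero_mem
    | succ j ih =>
      intro k hk hj
      have h1 := hstep k (by omega)
      have h2 := I.add_mem h1 (ih (k + 1) (by omega) (by omega))
      apply hnzd
      simpa using h2
  have hγ : γ ∈ I := by
    rw [← sum_homogeneousComponent γ]
    refine I.sum_mem fun k _ => ?_
    by_cases hk : k < N
    · exact hup k hk
    · exact hdown (γ.totalDegree + 1) k (by omega) (by omega)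
  rw [← hxy]
  exact I.add_mem hx (I.mul_mem_right _ hγ)

lemma hm_lift {h : MvPolynomial (Fin 3) ℝ} (hh : h.IsHomogeneous 1)
    (J : Ideal (MvPolynomial (Fin 3) ℝ)) (hJ : h - 1 ∈ J) (g : MvPolynomial (Fin 3) ℝ) (N : ℕ)
    (hN : g.totalDegree ≤ N) :
    ∃ g' ∈ homogeneousSubmodule (Fin 3) ℝ N, Ideal.Quotient.mk J g' = Ideal.Quotient.mk J g := by
  refine ⟨∑ i ∈ Finset.range (g.totalDegree + 1), h ^ (N - i) * homogeneousComponent i g, ?_, ?_⟩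
  · refine Submodule.sum_mem _ fun i hi => ?_
    have hi' := Finset.mem_range.1 hi
    have h1 := (hh.pow (N - i)).mul (homogeneousComponent_isHomogeneous i g)
    rw [mem_homogeneousSubmodule]
    convert h1 using 1
    omega
  · have h1 : Ideal.Quotient.mk J h = 1 := by
      rw [← map_one (Ideal.Quotient.mk J)]
      exact Ideal.Quotient.eq.2 hJ
    conv_rhs => rw [← sum_homogeneousComponent g]
    simp [h1]

lemma hm_rank {p f : MvPolynomial (Fin 3) ℝ} {D s : ℕ} (hp : p.IsHomogeneous D)
    (hf : f.IsHomogeneous s) (hpp : Prime p) (hpf : ¬ p ∣ f)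
    {h : MvPolynomial (Fin 3) ℝ} (hh : h.IsHomogeneous 1)
    (J : Ideal (MvPolynomial (Fin 3) ℝ)) (hpJ : p ∈ J) (hfJ : f ∈ J) (hJ : h - 1 ∈ J) :
    Module.Finite ℝ (MvPolynomial (Fin 3) ℝ ⧸ J) ∧
      Module.finrank ℝ (MvPolynomial (Fin 3) ℝ ⧸ J) ≤ D * s := by
  have hr : Module.rank ℝ (MvPolynomial (Fin 3) ℝ ⧸ J) ≤ (D * s : ℕ) := by
    refine rank_le fun S hS => ?_
    choose σ hσ using Ideal.Quotient.mk_surjective (I := J)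
    set N := D + s + S.sup (fun a => (σ a).totalDegree) with hN
    let Ψ : MvPolynomial (Fin 3) ℝ →ₗ[ℝ] (MvPolynomial (Fin 3) ℝ ⧸ J) :=
      (Ideal.Quotient.mkₐ ℝ J).toLinearMap
    have hdim := hm_dim hp hf hpp hpf (N := N) (by omega) Ψ
      (fun q => by
        change Ideal.Quotient.mk J _ = 0
        exact Ideal.Quotient.eq_zero_iff_mem.2 (J.mul_mem_right _ hpJ))
      (fun q => by
        change Ideal.Quotient.mk J _ = 0
        exact Ideal.Quotient.eq_zero_iff_mem.2 (J.mul_mem_right _ hfJ))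
    have hmem : ∀ a : S, (a : MvPolynomial (Fin 3) ℝ ⧸ J) ∈
        (homogeneousSubmodule (Fin 3) ℝ N).map Ψ := by
      rintro ⟨a, ha⟩
      have hle : (σ a).totalDegree ≤ N :=
        (Finset.le_sup (f := fun a => (σ a).totalDegree) ha).trans (by omega)
      obtain ⟨g', hg', e⟩ := hm_lift hh J hJ (σ a) N hle
      exact ⟨g', hg', e.trans (hσ a)⟩
    let v : S → (homogeneousSubmodule (Fin 3) ℝ N).map Ψ := fun a => ⟨a, hmem a⟩
    have hv : LinearIndependent ℝ v := by
      apply LinearIndependent.of_comp ((homogeneousSubmodule (Fin 3) ℝ N).map Ψ).subtype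
      exact hS
    have := hv.fintype_card_le_finrank
    simp only [Fintype.card_coe] at this
    exact this.trans hdim
  have hfin : Module.Finite ℝ (MvPolynomial (Fin 3) ℝ ⧸ J) := by
    rw [← Module.rank_lt_aleph0_iff]
    exact hr.trans_lt (Cardinal.natCast_lt_aleph0)
  refine ⟨hfin, ?_⟩
  exact Module.finrank_le_of_rank_le hr

lemma hm_bound {p f : MvPolynomial (Fin 3) ℝ} {D s : ℕ} (hp : p.IsHomogeneous D)
    (hf : f.IsHomogeneous s) (hpp : Prime p) (hpf : ¬ p ∣ f)
    (hpos : ∀ x : Fin 3 → ℝ, x ≠ 0 → 0 < eval x p) (hDs : D ≤ 2 * s)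
    (l : MvPolynomial (Fin 3) ℝ →ₗ[ℝ] ℝ)
    (hlp : ∀ q, q.IsHomogeneous (2 * s - D) → l (p * q) = 0)
    (hlf : ∀ q, q.IsHomogeneous s → l (f * q) = 0)
    (V : Submodule ℝ (MvPolynomial (Fin 3) ℝ)) (hV : V ≤ homogeneousSubmodule (Fin 3) ℝ s)
    (hlV : ∀ g ∈ V, g ≠ 0 → 0 < l (g * g)) :
    2 * Module.finrank ℝ V ≤ D * s := by
  obtain ⟨a, ha⟩ := hm_exists_nzd hp hf hpp hpf
    (hpos _ (fun h0 => by simpa using congrFun h0 2)).ne'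
  set h : MvPolynomial (Fin 3) ℝ := X 0 - C a * X 1 with hhdef
  have hh : h.IsHomogeneous 1 := by
    refine (isHomogeneous_X ℝ (0 : Fin 3)).sub ?_
    simpa using (isHomogeneous_C (Fin 3) a).mul (isHomogeneous_X ℝ (1 : Fin 3))
  set J := Ideal.span {p, f} ⊔ Ideal.span {h - 1} with hJ
  have hpJ : p ∈ J := Ideal.mem_sup_left (Ideal.subset_span (by simp))
  have hfJ : f ∈ J := Ideal.mem_sup_left (Ideal.subset_span (by simp))
  have hhJ : h - 1 ∈ J := Ideal.mem_sup_right (Ideal.subset_span (by simp))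
  obtain ⟨hfin, hrk⟩ := hm_rank hp hf hpp hpf hh J hpJ hfJ hhJ
  have hemp : IsEmpty ((MvPolynomial (Fin 3) ℝ ⧸ J) →ₐ[ℝ] ℝ) := by
    constructor
    intro φ
    let φ' : MvPolynomial (Fin 3) ℝ →ₐ[ℝ] ℝ := φ.comp (Ideal.Quotient.mkₐ ℝ J)
    let x : Fin 3 → ℝ := fun i => φ' (X i)
    have hφ : ∀ g, φ' g = eval x g := by
      intro g
      have : φ' = aeval x := by
        apply MvPolynomial.algHom_ext
        intro i; simp [x]
      rw [this]; simp [aeval_eq_eval]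
    have hz : ∀ g ∈ J, eval x g = 0 := by
      intro g hg
      rw [← hφ]
      change φ (Ideal.Quotient.mk J g) = 0
      rw [Ideal.Quotient.eq_zero_iff_mem.2 hg, map_zero]
    have h1 := hz p hpJ
    have h2 := hz _ hhJ
    have hx : x ≠ 0 := by
      intro hx
      rw [hx, hhdef] at h2
      simp at h2
    exact (hpos x hx).ne' h1
  obtain ⟨i, hi⟩ := hm_sqrt_neg_one (MvPolynomial (Fin 3) ℝ ⧸ J) hemp
  let Ψ : MvPolynomial (Fin 3) ℝ →ₗ[ℝ] (MvPolynomial (Fin 3) ℝ ⧸ J) :=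
    (Ideal.Quotient.mkₐ ℝ J).toLinearMap
  let T : (V × V) →ₗ[ℝ] (MvPolynomial (Fin 3) ℝ ⧸ J) :=
    (Ψ ∘ₗ V.subtype ∘ₗ LinearMap.fst ℝ V V) -
      (LinearMap.mulLeft ℝ i) ∘ₗ (Ψ ∘ₗ V.subtype ∘ₗ LinearMap.snd ℝ V V)
  have hT : Function.Injective T := by
    rw [← LinearMap.ker_eq_bot, LinearMap.ker_eq_bot']
    rintro ⟨⟨x, hx⟩, ⟨y, hy⟩⟩ hxy
    have e : Ideal.Quotient.mk J x - i * Ideal.Quotient.mk J y = 0 := hxy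
    have e2 : Ideal.Quotient.mk J (x * x + y * y) = 0 := by
      simp only [map_add, map_mul]
      linear_combination (Ideal.Quotient.mk J x + i * Ideal.Quotient.mk J y) * e
        + (Ideal.Quotient.mk J y) ^ 2 * hi
    have hxh : x.IsHomogeneous s := hV hx
    have hyh : y.IsHomogeneous s := hV hy
    have hhom : (x * x + y * y).IsHomogeneous (2 * s) := by
      rw [two_mul]; exact (hxh.mul hxh).add (hyh.mul hyh)
    have hmem := hm_dehom hp hf hh ha hhom (Ideal.Quotient.eq_zero_iff_mem.1 e2)
    obtain ⟨u, v, hu, hv, huv⟩ := hm_mem_span hp hf hhom hDs (by omega) hmem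
    have hl : l (x * x) + l (y * y) = 0 := by
      rw [← map_add, huv, map_add, hlp u hu, hlf v (by convert hv using 1; omega), add_zero]
    have hnn : ∀ g ∈ V, 0 ≤ l (g * g) := by
      intro g hg
      by_cases h0 : g = 0
      · simp [h0]
      · exact (hlV g hg h0).le
    have hx0 : x = 0 := by
      by_contra h0
      linarith [hlV x hx h0, hnn y hy]
    have hy0 : y = 0 := by
      by_contra h0
      linarith [hlV y hy h0, hnn x hx]
    subst hx0 hy0
    rfl
  have hVfin : Module.Finite ℝ V := Submodule.finiteDimensional_of_le hV
  have := LinearMap.finrank_le_finrank_of_injective hT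
  rw [Module.finrank_prod] at this
  omega

lemma hm_eval_smul {p : MvPolynomial (Fin 3) ℝ} {D : ℕ} (hp : p.IsHomogeneous D) (c : ℝ)
    (x : Fin 3 → ℝ) : eval (c • x) p = c ^ D * eval x p := by
  rw [eval_eq', eval_eq', Finset.mul_sum]
  refine Finset.sum_congr rfl fun m hm => ?_
  have h1 : m.degree = D := by
    rw [← hp (mem_support_iff.1 hm), Finsupp.degree_eq_weight_one]
    rfl
  rw [← h1, Finsupp.degree_eq_sum]
  simp only [Fin.prod_univ_three, Fin.sum_univ_three, Pi.smul_apply, smul_eq_mul]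
  ring

lemma hm_sos_zero {k : ℕ} (g : Fin k → MvPolynomial (Fin 3) ℝ) (h : ∑ i, g i ^ 2 = 0) :
    ∀ i, g i = 0 := by
  intro i
  apply MvPolynomial.funext
  intro x
  have h1 := congrArg (eval x) h
  simp only [map_sum, map_pow, map_zero] at h1
  rw [Finset.sum_eq_zero_iff_of_nonneg (fun i _ => sq_nonneg _)] at h1
  simpa using h1 i (Finset.mem_univ i)

lemma hm_root {p : MvPolynomial (Fin 3) ℝ} {D : ℕ} (hD : 0 < D) (hp : p.IsHomogeneous D)
    (h1 : eval ![1, 0, 0] p ≠ 0) : ∃ t : ℂ, aeval (![t, 1, 0] : Fin 3 → ℂ) p = 0 := by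
  let P : Polynomial ℝ := aeval ![Polynomial.X, 1, 0] p
  have hPev : ∀ u : ℝ, Polynomial.eval u P = eval ![u, 1, 0] p := by
    intro u
    have : (Polynomial.aeval u).comp (aeval (R := ℝ) (![Polynomial.X, 1, 0] : Fin 3 → Polynomial ℝ)) =
        aeval (![u, 1, 0] : Fin 3 → ℝ) := by
      apply MvPolynomial.algHom_ext
      intro i; fin_cases i <;> simp
    have h2 := congrArg (fun φ => φ p) this
    simpa [aeval_eq_eval, Polynomial.coe_aeval_eq_eval] using h2
  let Q : Polynomial ℝ := aeval ![1, Polynomial.X, 0] p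
  have hQev : ∀ u : ℝ, Polynomial.eval u Q = eval ![1, u, 0] p := by
    intro u
    have : (Polynomial.aeval u).comp (aeval (R := ℝ) (![1, Polynomial.X, 0] : Fin 3 → Polynomial ℝ)) =
        aeval (![1, u, 0] : Fin 3 → ℝ) := by
      apply MvPolynomial.algHom_ext
      intro i; fin_cases i <;> simp
    have h2 := congrArg (fun φ => φ p) this
    simpa [aeval_eq_eval, Polynomial.coe_aeval_eq_eval] using h2
  have hdeg : P.degree ≠ 0 := by
    intro h0
    have hc := Polynomial.eq_C_of_degree_le_zero h0.le
    set c := P.coeff 0 with hcdef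
    have hX : Polynomial.X * (Q - Polynomial.C c * Polynomial.X ^ D) = 0 := by
      apply Polynomial.funext
      intro u
      by_cases hu : u = 0
      · simp [hu]
      · have e1 : eval ![1, u, 0] p = u ^ D * eval ![u⁻¹, 1, 0] p := by
          have e2 : (![1, u, 0] : Fin 3 → ℝ) = u • ![u⁻¹, 1, 0] := by
            ext i; fin_cases i <;> simp [hu]
          rw [e2]
          exact hm_eval_smul hp _ _
        have e3 := hPev u⁻¹
        rw [hc] at e3
        simp only [Polynomial.eval_C] at e3
        simp [hQev, e1, ← e3]
        right; ring
    rcases mul_eq_zero.1 hX with h | h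
    · exact Polynomial.X_ne_zero h
    · apply h1
      rw [← hQev 0, sub_eq_zero.1 h]
      simp [hD.ne']
  obtain ⟨t, ht⟩ := IsAlgClosed.exists_aeval_eq_zero ℂ P hdeg
  refine ⟨t, ?_⟩
  have : (Polynomial.aeval t).comp (aeval (R := ℝ) (![Polynomial.X, 1, 0] : Fin 3 → Polynomial ℝ)) =
      aeval (![t, 1, 0] : Fin 3 → ℂ) := by
    apply MvPolynomial.algHom_ext
    intro i; fin_cases i <;> simp
  rw [← this]
  exact ht

lemma hm_main {p : MvPolynomial (Fin 3) ℝ} {d s : ℕ} (hd : 1 ≤ d) (h1 : s < 2 * d)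
    (h2 : 2 * d ≤ s + 2) (h3 : d ≤ s) (hp : p.IsHomogeneous (2 * d))
    (hpos : ∀ x : Fin 3 → ℝ, x ≠ 0 → 0 < eval x p) (hpp : Prime p) :
    ∃ q : MvPolynomial (Fin 3) ℝ, q ≠ 0 ∧ q.IsHomogeneous (2 * s - 2 * d) ∧
      ∃ (k : ℕ) (f : Fin k → MvPolynomial (Fin 3) ℝ),
        (∀ i, (f i).IsHomogeneous s) ∧ p * q = ∑ i, (f i) ^ 2 := by
  by_contra hcon
  set E := homogeneousSubmodule (Fin 3) ℝ s with hE
  let B : E →ₗ[ℝ] E →ₗ[ℝ] MvPolynomial (Fin 3) ℝ :=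
    (LinearMap.mul ℝ (MvPolynomial (Fin 3) ℝ)).domRestrict₁₂ E E
  have hB : ∀ x y, B x y = (x : MvPolynomial (Fin 3) ℝ) * y := fun x y => rfl
  let L := (homogeneousSubmodule (Fin 3) ℝ (2 * s - 2 * d)).map (LinearMap.mulLeft ℝ p)
  obtain ⟨l0, hl0, hl0pos⟩ := hm_sep B L (by
    rintro k g ⟨q, hq, e⟩
    have e' : p * q = ∑ i, ((g i : MvPolynomial (Fin 3) ℝ)) ^ 2 := by
      simpa [hB, sq] using e
    have hq0 : q = 0 := by
      by_contra hq0
      exact hcon ⟨q, hq0, hq, k, fun i => g i, fun i => (g i).2, e'⟩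
    rw [hq0, mul_zero] at e'
    intro i
    exact Subtype.ext (hm_sos_zero _ e'.symm i))
  obtain ⟨t, ht⟩ := hm_root (by omega) hp
    (hpos ![1, 0, 0] (fun h0 => by simpa using congrFun h0 0)).ne'
  set z : Fin 3 → ℂ := ![t, 1, 0] with hz
  let lam : MvPolynomial (Fin 3) ℝ →ₗ[ℝ] ℝ := Complex.reLm ∘ₗ (aeval z).toLinearMap
  have hlam : ∀ g, lam g = (aeval z g).re := fun g => rfl
  let P : E →ₗ[ℝ] E →ₗ[ℝ] ℝ := B.compr₂ l0
  let Q : E →ₗ[ℝ] E →ₗ[ℝ] ℝ := B.compr₂ lam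
  have hP : ∀ x y, P x y = l0 ((x : MvPolynomial (Fin 3) ℝ) * y) := fun x y => rfl
  have hQ : ∀ x y, Q x y = lam ((x : MvPolynomial (Fin 3) ℝ) * y) := fun x y => rfl
  let g₀ : E := ⟨X 1 ^ s, by
    rw [hE, mem_homogeneousSubmodule]
    simpa using (isHomogeneous_X ℝ (1 : Fin 3)).pow s⟩
  obtain ⟨τ, hτ, f, hf0, hf⟩ := hm_critical P Q
    (fun x y => by rw [hP, hP, mul_comm]) (fun x y => by rw [hQ, hQ, mul_comm])
    (fun g hg => hl0pos g hg) g₀ (by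
      rw [hQ, hlam]
      simp [g₀, hz])
  let l : MvPolynomial (Fin 3) ℝ →ₗ[ℝ] ℝ := l0 - τ • lam
  have hl : ∀ g, l g = l0 g - τ * lam g := fun g => rfl
  let K := LinearMap.ker (lam ∘ₗ E.subtype)
  let V := K.map E.subtype
  have hf0' : (f : MvPolynomial (Fin 3) ℝ) ≠ 0 := fun h => hf0 (Subtype.ext h)
  have hpf : ¬ p ∣ (f : MvPolynomial (Fin 3) ℝ) := by
    rintro ⟨c, hc⟩
    have hc0 : c ≠ 0 := by
      rintro rfl; exact hf0' (by simpa using hc)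
    have e1 := MvPolynomial.totalDegree_mul_of_isDomain hpp.ne_zero hc0
    rw [← hc, IsHomogeneous.totalDegree f.2 hf0', hp.totalDegree hpp.ne_zero] at e1
    omega
  have hbound := hm_bound hp (f := f) f.2 hpp hpf hpos (by omega) l
    (fun q hq => by
      have e1 : l0 (p * q) = 0 := hl0 _ ⟨q, hq, rfl⟩
      have e2 : lam (p * q) = 0 := by rw [hlam, map_mul, ht]; simp
      rw [hl, e1, e2]; simp)
    (fun q hq => hf ⟨q, hq⟩) V (Submodule.map_subtype_le E K) (by
      rintro g ⟨⟨g', hg'⟩, hgK, rfl⟩ hg0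
      have hg0' : (⟨g', hg'⟩ : E) ≠ 0 := fun h => hg0 (by rw [h]; simp)
      have e1 : 0 < l0 (g' * g') := hl0pos _ hg0'
      have e2 : (aeval z g').re = 0 := hgK
      have e3 : lam (g' * g') ≤ 0 := by
        rw [hlam, map_mul, Complex.mul_re, e2]
        nlinarith [sq_nonneg (aeval z g').im]
      change 0 < l (g' * g')
      rw [hl]
      nlinarith)
  have hV : Module.finrank ℝ V = Module.finrank ℝ K := Submodule.finrank_map_subtype_eq _ _
  have hrn := LinearMap.finrank_range_add_finrank_ker (lam ∘ₗ E.subtype)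
  have hr1 : Module.finrank ℝ (LinearMap.range (lam ∘ₗ E.subtype)) ≤ 1 := by
    simpa using Submodule.finrank_le (LinearMap.range (lam ∘ₗ E.subtype))
  have hEn : Module.finrank ℝ E = (s + 2).choose 2 := hm_finrank s
  rw [hEn] at hrn
  have hch : 2 * (s + 2).choose 2 = (s + 2) * (s + 1) := by
    rw [Nat.choose_two_right, mul_comm]
    exact Nat.div_mul_cancel (Nat.even_mul_pred_self (s + 2)).two_dvd
  have hK : (s + 2).choose 2 ≤ Module.finrank ℝ V + 1 := by
    rw [hV, ← hrn]
    have : Module.finrank ℝ K = Module.finrank ℝ (LinearMap.ker (lam ∘ₗ E.subtype)) := rfl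
    omega
  nlinarith

/-- Sums of squares of forms of degree `s`. -/
def HmSos (s : ℕ) (g : MvPolynomial (Fin 3) ℝ) : Prop :=
  ∃ (k : ℕ) (f : Fin k → MvPolynomial (Fin 3) ℝ),
    (∀ i, (f i).IsHomogeneous s) ∧ g = ∑ i, (f i) ^ 2

lemma HmSos.mul {s t : ℕ} {g h : MvPolynomial (Fin 3) ℝ} (hg : HmSos s g) (hh : HmSos t h) :
    HmSos (s + t) (g * h) := by
  obtain ⟨k, f, hf, rfl⟩ := hg
  obtain ⟨m, e, he, rfl⟩ := hh
  refine ⟨k * m, fun i => f (finProdFinEquiv.symm i).1 * e (finProdFinEquiv.symm i).2,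
    fun i => (hf _).mul (he _), ?_⟩
  rw [Finset.sum_mul_sum, ← Finset.sum_product', Finset.univ_product_univ]
  refine (Fintype.sum_equiv finProdFinEquiv _ _ ?_)
  intro i
  simp [mul_pow]

/-- A form without nontrivial real zeros has constant sign. -/
lemma hm_sign {p : MvPolynomial (Fin 3) ℝ} (h : ∀ x : Fin 3 → ℝ, x ≠ 0 → eval x p ≠ 0) :
    (∀ x : Fin 3 → ℝ, x ≠ 0 → 0 < eval x p) ∨ (∀ x : Fin 3 → ℝ, x ≠ 0 → 0 < eval x (-p)) := by
  have hc : IsConnected ({0}ᶜ : Set (Fin 3 → ℝ)) := by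
    apply isConnected_compl_singleton_of_one_lt_rank
    rw [← Module.finrank_eq_rank, Module.finrank_fin_fun]
    norm_num
  have hcont : ContinuousOn (fun x => eval x p) ({0}ᶜ : Set (Fin 3 → ℝ)) :=
    (MvPolynomial.continuous_eval p).continuousOn
  by_contra hcon
  push Not at hcon
  obtain ⟨⟨x, hx, hxp⟩, ⟨y, hy, hyp⟩⟩ := hcon
  have := hc.isPreconnected.intermediate_value (a := x) (b := y) hx hy hcont
  have h0 : (0 : ℝ) ∈ Set.Icc (eval x p) (eval y p) := ⟨hxp, by simpa using hyp⟩
  obtain ⟨w, hw, hw0⟩ := this h0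
  exact h w hw hw0

lemma hm_even {p : MvPolynomial (Fin 3) ℝ} {a : ℕ} (hp : p.IsHomogeneous a)
    (h : ∀ x : Fin 3 → ℝ, x ≠ 0 → 0 < eval x p) : Even a := by
  by_contra ha
  rw [Nat.not_even_iff_odd] at ha
  have h1 := h ![1, 0, 0] (fun h0 => by simpa using congrFun h0 0)
  have h2 := h ((-1 : ℝ) • ![1, 0, 0]) (fun h0 => by simpa using congrFun h0 0)
  rw [hm_eval_smul hp, ha.neg_one_pow] at h2
  linarith

lemma hm_factor_pos {p : MvPolynomial (Fin 3) ℝ} {d : ℕ} (hd : 1 ≤ d)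
    (hp : p.IsHomogeneous (2 * d)) (hpos : ∀ x : Fin 3 → ℝ, x ≠ 0 → 0 < eval x p)
    (hirr : ¬ Irreducible p) :
    ∃ (d₁ d₂ : ℕ) (p₁ p₂ : MvPolynomial (Fin 3) ℝ), 1 ≤ d₁ ∧ 1 ≤ d₂ ∧ d₁ + d₂ = d ∧
      p₁.IsHomogeneous (2 * d₁) ∧ p₂.IsHomogeneous (2 * d₂) ∧
      (∀ x : Fin 3 → ℝ, x ≠ 0 → 0 < eval x p₁) ∧
      (∀ x : Fin 3 → ℝ, x ≠ 0 → 0 < eval x p₂) ∧ p = p₁ * p₂ := by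
  have hp0 : p ≠ 0 := by
    rintro rfl
    simpa using hpos ![1, 0, 0] (fun h0 => by simpa using congrFun h0 0)
  obtain ⟨a, b, p₁, p₂, ha, hb, hab, h1, h2, e⟩ := hm_factor hp hp0 (by omega) hirr
  have key : ∃ (p₁ p₂ : MvPolynomial (Fin 3) ℝ), p₁.IsHomogeneous a ∧ p₂.IsHomogeneous b ∧
      (∀ x : Fin 3 → ℝ, x ≠ 0 → 0 < eval x p₁) ∧ p = p₁ * p₂ := by
    rcases hm_sign (p := p₁) (fun x hx h0 => (hpos x hx).ne' (by rw [e, map_mul, h0, zero_mul]))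
      with h | h
    · exact ⟨p₁, p₂, h1, h2, h, e⟩
    · exact ⟨-p₁, -p₂, h1.neg, h2.neg, h, by rw [e]; ring⟩
  obtain ⟨p₁, p₂, h1, h2, hpos1, e⟩ := key
  have hpos2 : ∀ x : Fin 3 → ℝ, x ≠ 0 → 0 < eval x p₂ := by
    intro x hx
    have h3 := hpos x hx
    rw [e, map_mul] at h3
    exact (mul_pos_iff_of_pos_left (hpos1 x hx)).1 h3
  obtain ⟨d₁, hd₁⟩ := hm_even h1 hpos1
  obtain ⟨d₂, hd₂⟩ := hm_even h2 hpos2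
  refine ⟨d₁, d₂, p₁, p₂, by omega, by omega, by omega, ?_, ?_, hpos1, hpos2, e⟩
  · convert h1 using 1; omega
  · convert h2 using 1; omega

lemma hm_pos_aux (d : ℕ) : ∀ p : MvPolynomial (Fin 3) ℝ, 1 ≤ d → p.IsHomogeneous (2 * d) →
    (∀ x : Fin 3 → ℝ, x ≠ 0 → 0 < eval x p) →
    (∃ q : MvPolynomial (Fin 3) ℝ, q ≠ 0 ∧ q.IsHomogeneous (2 * d - 2) ∧
      HmSos (2 * d - 1) (p * q)) ∧
    (2 ≤ d → ∃ q : MvPolynomial (Fin 3) ℝ, q ≠ 0 ∧ q.IsHomogeneous (2 * d - 4) ∧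
      HmSos (2 * d - 2) (p * q)) := by
  induction d using Nat.strong_induction_on with
  | _ d ih =>
  intro p hd hp hpos
  by_cases hirr : Irreducible p
  · constructor
    · obtain ⟨q, hq0, hq, h⟩ := hm_main (s := 2 * d - 1) hd (by omega) (by omega) (by omega)
        hp hpos hirr.prime
      refine ⟨q, hq0, ?_, h⟩
      convert hq using 1; omega
    · intro hd2
      obtain ⟨q, hq0, hq, h⟩ := hm_main (s := 2 * d - 2) hd (by omega) (by omega) (by omega)
        hp hpos hirr.prime
      refine ⟨q, hq0, ?_, h⟩
      convert hq using 1; omega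
  · obtain ⟨d₁, d₂, p₁, p₂, h1, h2, h12, hp1, hp2, hpos1, hpos2, rfl⟩ :=
      hm_factor_pos hd hp hpos hirr
    obtain ⟨⟨q₁, hq1, hqh1, hs1⟩, -⟩ := ih d₁ (by omega) p₁ h1 hp1 hpos1
    obtain ⟨⟨q₂, hq2, hqh2, hs2⟩, -⟩ := ih d₂ (by omega) p₂ h2 hp2 hpos2
    have hs := hs1.mul hs2
    have hqq := hqh1.mul hqh2
    have hX : HmSos 1 (X 0 ^ 2) := ⟨1, fun _ => X 0, fun _ => isHomogeneous_X ℝ 0, by simp⟩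
    constructor
    · refine ⟨X 0 ^ 2 * (q₁ * q₂), mul_ne_zero (pow_ne_zero _ (X_ne_zero 0)) (mul_ne_zero hq1 hq2),
        ?_, ?_⟩
      · convert ((isHomogeneous_X ℝ (0 : Fin 3)).pow 2).mul hqq using 1; omega
      · convert hX.mul hs using 1
        · omega
        · ring
    · intro _
      refine ⟨q₁ * q₂, mul_ne_zero hq1 hq2, ?_, ?_⟩
      · convert hqq using 1; omega
      · convert hs using 1
        · omega
        · ring

lemma hm_cs {E : Type*} [AddCommGroup E] [Module ℝ E] [FiniteDimensional ℝ E]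
    (P : E →ₗ[ℝ] E →ₗ[ℝ] ℝ) (hsymm : ∀ x y, P x y = P y x)
    (hpos : ∀ g, g ≠ 0 → 0 < P g g) (φ : E →ₗ[ℝ] ℝ) :
    ∃ c : ℝ, 0 ≤ c ∧ ∀ g, φ g ^ 2 ≤ c * P g g := by
  have hinj : Function.Injective P := by
    rw [← LinearMap.ker_eq_bot, LinearMap.ker_eq_bot']
    intro g hg
    by_contra h0
    have := hpos g h0
    rw [hg] at this
    simp at this
  have hnn : ∀ g, 0 ≤ P g g := by
    intro g
    by_cases h : g = 0
    · simp [h]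
    · exact (hpos g h).le
  have hsurj : Function.Surjective P :=
    (LinearMap.injective_iff_surjective_of_finrank_eq_finrank
      (Subspace.dual_finrank_eq (K := ℝ) (V := E)).symm).1 hinj
  obtain ⟨u, rfl⟩ := hsurj φ
  refine ⟨P u u, hnn u, fun g => ?_⟩
  by_cases hu : u = 0
  · simp [hu]
  have hu' := hpos u hu
  have h1 := hnn (P u u • g - P u g • u)
  simp only [map_sub, map_smul, LinearMap.sub_apply, LinearMap.smul_apply, smul_eq_mul,
    hsymm g u] at h1
  have h2 : 0 ≤ P u u * (P u u * P g g - P u g ^ 2) := by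
    calc (0 : ℝ) ≤ _ := h1
      _ = _ := by ring
  nlinarith [nonneg_of_mul_nonneg_right h2 hu']

lemma hm_span_bound {p : MvPolynomial (Fin 3) ℝ} (hp0 : p ≠ 0)
    (hpos : ∀ x : Fin 3 → ℝ, 0 ≤ eval x p) (n : ℕ) (K : (Fin 3 → ℝ) → ℝ)
    (φ : Module.Dual ℝ (homogeneousSubmodule (Fin 3) ℝ n)) :
    ∃ M : ℝ, ∀ (q : homogeneousSubmodule (Fin 3) ℝ n) (S : ℝ),
      (∀ x, 0 < eval x p → |eval x (q : MvPolynomial (Fin 3) ℝ)| ≤ K x * S) →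
      |φ q| ≤ M * S := by
  let ev : (Fin 3 → ℝ) → Module.Dual ℝ (homogeneousSubmodule (Fin 3) ℝ n) := fun x =>
    (aeval x).toLinearMap ∘ₗ (homogeneousSubmodule (Fin 3) ℝ n).subtype
  have hev : ∀ x q, ev x q = eval x (q : MvPolynomial (Fin 3) ℝ) := by
    intro x q
    change aeval x (q : MvPolynomial (Fin 3) ℝ) = _
    rw [aeval_eq_eval]
  let W : Submodule ℝ (Module.Dual ℝ (homogeneousSubmodule (Fin 3) ℝ n)) :=
    Submodule.span ℝ (ev '' {x | 0 < eval x p})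
  have hW : W = ⊤ := by
    have h1 : W.dualCoannihilator = ⊥ := by
      rw [eq_bot_iff]
      intro q hq
      rw [Submodule.mem_dualCoannihilator] at hq
      rw [Submodule.mem_bot]
      have hz : p * (q : MvPolynomial (Fin 3) ℝ) = 0 := by
        apply MvPolynomial.funext
        intro x
        rw [map_mul, map_zero]
        rcases (hpos x).eq_or_lt with h | h
        · rw [← h, zero_mul]
        · have := hq (ev x) (Submodule.subset_span ⟨x, h, rfl⟩)
          rw [hev] at this
          rw [this, mul_zero]
      exact Subtype.ext ((mul_eq_zero.1 hz).resolve_left hp0)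
    rw [← Subspace.dualCoannihilator_dualAnnihilator_eq (W := W), h1,
      Submodule.dualAnnihilator_bot]
  have hφ : φ ∈ W := by rw [hW]; trivial
  induction hφ using Submodule.span_induction with
  | mem φ h =>
    obtain ⟨x, hx, rfl⟩ := h
    exact ⟨K x, fun q S h => by rw [hev]; exact h x hx⟩
  | zero => exact ⟨0, fun q S h => by simp⟩
  | add φ ψ _ _ h1 h2 =>
    obtain ⟨M₁, h1⟩ := h1
    obtain ⟨M₂, h2⟩ := h2
    refine ⟨M₁ + M₂, fun q S h => ?_⟩
    have := h1 q S h
    have := h2 q S h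
    rw [LinearMap.add_apply]
    calc _ ≤ |φ q| + |ψ q| := abs_add_le _ _
      _ ≤ _ := by linarith
  | smul a φ _ h1 =>
    obtain ⟨M₁, h1⟩ := h1
    refine ⟨|a| * M₁, fun q S h => ?_⟩
    rw [LinearMap.smul_apply, smul_eq_mul, abs_mul, mul_assoc]
    exact mul_le_mul_of_nonneg_left (h1 q S h) (abs_nonneg a)

lemma hm_nonneg {p q : MvPolynomial (Fin 3) ℝ} (hp0 : p ≠ 0)
    (hp : ∀ x : Fin 3 → ℝ, 0 ≤ eval x p) (hpq : ∀ x : Fin 3 → ℝ, 0 ≤ eval x (p * q))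
    (x : Fin 3 → ℝ) : 0 ≤ eval x q := by
  by_contra hx
  push Not at hx
  have h1 : ∀ᶠ y in nhds x, eval y q < 0 :=
    (MvPolynomial.continuous_eval q).continuousAt.eventually_lt continuousAt_const hx
  have h2 : (fun y => eval y p) =ᶠ[nhds x] fun y => eval y 0 := by
    filter_upwards [h1] with y hy
    have h3 := hpq y
    rw [map_mul] at h3
    rw [map_zero]
    by_contra hne
    have h4 : 0 < eval y p := lt_of_le_of_ne (hp y) (Ne.symm hne)
    exact absurd h3 (not_le.2 (mul_neg_of_pos_of_neg h4 hy))
  have h3 := AnalyticOnNhd.eq_of_eventuallyEq (AnalyticOnNhd.eval_mvPolynomial p)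
    (AnalyticOnNhd.eval_mvPolynomial 0) h2
  exact hp0 (MvPolynomial.funext fun y => congrFun h3 y)

lemma hm_perturb {p : MvPolynomial (Fin 3) ℝ} {d : ℕ} (hd : 2 ≤ d)
    (hp : p.IsHomogeneous (2 * d)) (hpos : ∀ x : Fin 3 → ℝ, 0 ≤ eval x p) (hp0 : p ≠ 0) :
    ∃ q : MvPolynomial (Fin 3) ℝ, q ≠ 0 ∧ q.IsHomogeneous (2 * d - 4) ∧
      HmSos (2 * d - 2) (p * q) := by
  by_contra hcon
  set E := homogeneousSubmodule (Fin 3) ℝ (2 * d - 2) with hE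
  let B : E →ₗ[ℝ] E →ₗ[ℝ] MvPolynomial (Fin 3) ℝ :=
    (LinearMap.mul ℝ (MvPolynomial (Fin 3) ℝ)).domRestrict₁₂ E E
  have hB : ∀ x y, B x y = (x : MvPolynomial (Fin 3) ℝ) * y := fun x y => rfl
  let L := (homogeneousSubmodule (Fin 3) ℝ (2 * d - 4)).map (LinearMap.mulLeft ℝ p)
  obtain ⟨l, hl, hlpos⟩ := hm_sep B L (by
    rintro k g ⟨q, hq, e⟩
    have e' : p * q = ∑ i, ((g i : MvPolynomial (Fin 3) ℝ)) ^ 2 := by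
      simpa [hB, sq] using e
    have hq0 : q = 0 := by
      by_contra hq0
      exact hcon ⟨q, hq0, hq, k, fun i => g i, fun i => (g i).2, e'⟩
    rw [hq0, mul_zero] at e'
    intro i
    exact Subtype.ext (hm_sos_zero _ e'.symm i))
  have hnn : ∀ g : E, 0 ≤ l ((g : MvPolynomial (Fin 3) ℝ) ^ 2) := by
    intro g
    by_cases h : g = 0
    · simp [h]
    · rw [sq]; exact (hlpos g h).le
  have hcs : ∀ x : Fin 3 → ℝ, ∃ c : ℝ, 0 ≤ c ∧ ∀ g : E,
      (eval x (g : MvPolynomial (Fin 3) ℝ)) ^ 2 ≤ c * l ((g : MvPolynomial (Fin 3) ℝ) ^ 2) := by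
    intro x
    obtain ⟨c, hc, h⟩ := hm_cs (B.compr₂ l)
      (fun a b => by
        change l ((a : MvPolynomial (Fin 3) ℝ) * b) = l ((b : MvPolynomial (Fin 3) ℝ) * a)
        rw [mul_comm])
      (fun g hg => hlpos g hg) ((aeval x).toLinearMap ∘ₗ E.subtype)
    refine ⟨c, hc, fun g => ?_⟩
    have h1 := h g
    have e1 : ((aeval x).toLinearMap ∘ₗ E.subtype : E →ₗ[ℝ] ℝ) g =
        eval x (g : MvPolynomial (Fin 3) ℝ) := by
      change aeval x (g : MvPolynomial (Fin 3) ℝ) = _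
      rw [aeval_eq_eval]
    rw [e1] at h1
    rw [sq (g : MvPolynomial (Fin 3) ℝ)]
    exact h1
  choose c hc0 hc using hcs
  let w : MvPolynomial (Fin 3) ℝ := X 0 ^ (2 * d) + X 1 ^ (2 * d) + X 2 ^ (2 * d)
  have hw : w.IsHomogeneous (2 * d) := by
    have h1 : ∀ i : Fin 3, (X i ^ (2 * d) : MvPolynomial (Fin 3) ℝ).IsHomogeneous (2 * d) := by
      intro i
      simpa using (isHomogeneous_X ℝ i).pow (2 * d)
    exact ((h1 0).add (h1 1)).add (h1 2)
  have hwpos : ∀ x : Fin 3 → ℝ, x ≠ 0 → 0 < eval x w := by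
    intro x hx
    have hev : Even (2 * d) := even_two_mul d
    have h0 := hev.pow_nonneg (x 0)
    have h1 := hev.pow_nonneg (x 1)
    have h2 := hev.pow_nonneg (x 2)
    simp only [w, map_add, map_pow, eval_X]
    by_contra hle
    push Not at hle
    apply hx
    have hne : 2 * d ≠ 0 := by omega
    ext i
    fin_cases i
    · exact (pow_eq_zero_iff hne).1 (show x 0 ^ (2 * d) = 0 by linarith)
    · exact (pow_eq_zero_iff hne).1 (show x 1 ^ (2 * d) = 0 by linarith)
    · exact (pow_eq_zero_iff hne).1 (show x 2 ^ (2 * d) = 0 by linarith)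
  have hwnn : ∀ x : Fin 3 → ℝ, 0 ≤ eval x w := by
    intro x
    have hev : Even (2 * d) := even_two_mul d
    have h0 := hev.pow_nonneg (x 0)
    have h1 := hev.pow_nonneg (x 1)
    have h2 := hev.pow_nonneg (x 2)
    simp only [w, map_add, map_pow, eval_X]
    positivity
  obtain ⟨M, hM⟩ := hm_span_bound hp0 hpos (2 * d - 4) (fun x => c x / eval x p)
    (l ∘ₗ LinearMap.mulLeft ℝ w ∘ₗ (homogeneousSubmodule (Fin 3) ℝ (2 * d - 4)).subtype)
  set ε : ℝ := 1 / (|M| + 1) with hε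
  have hM1 : 0 < |M| + 1 := by positivity
  have hε0 : 0 < ε := by positivity
  let pe := p + ε • w
  have hpe : ∀ x, eval x pe = eval x p + ε * eval x w := by
    intro x; simp [pe, smul_eval]
  have hpeh : pe.IsHomogeneous (2 * d) := by
    refine hp.add ?_
    exact (homogeneousSubmodule (Fin 3) ℝ (2 * d)).smul_mem ε hw
  have hpepos : ∀ x : Fin 3 → ℝ, x ≠ 0 → 0 < eval x pe := by
    intro x hx
    rw [hpe]
    have := mul_pos hε0 (hwpos x hx)
    linarith [hpos x]
  have hpe0 : pe ≠ 0 := by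
    intro h
    have := hpepos ![1, 0, 0] (fun h0 => by simpa using congrFun h0 0)
    rw [h] at this
    simp at this
  obtain ⟨q, hq0, hq, k, f, hf, e⟩ := (hm_pos_aux d pe (by omega) hpeh hpepos).2 hd
  set S := l (pe * q) with hS
  have hSsum : S = ∑ i, l (f i ^ 2) := by rw [hS, e, map_sum]
  have hSpos : 0 < S := by
    have hne : ∃ i, f i ≠ 0 := by
      by_contra h
      push Not at h
      have : pe * q = 0 := by rw [e]; simp [h]
      exact (mul_ne_zero hpe0 hq0) this
    obtain ⟨i, hi⟩ := hne
    rw [hSsum]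
    refine Finset.sum_pos' (fun i _ => hnn ⟨f i, hf i⟩) ⟨i, Finset.mem_univ i, ?_⟩
    rw [sq]
    exact hlpos ⟨f i, hf i⟩ (fun h => hi (congrArg Subtype.val h))
  have hbd : ∀ x, 0 < eval x p → |eval x q| ≤ c x / eval x p * S := by
    intro x hx
    have h1 : eval x pe * eval x q = ∑ i, (eval x (f i)) ^ 2 := by
      rw [← map_mul, e]; simp
    have h2 : eval x pe * eval x q ≤ c x * S := by
      rw [h1, hSsum, Finset.mul_sum]
      exact Finset.sum_le_sum fun i _ => hc x ⟨f i, hf i⟩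
    have h3 : eval x p ≤ eval x pe := by
      rw [hpe]
      have := mul_nonneg hε0.le (hwnn x)
      linarith
    have h4 : 0 ≤ eval x q := by
      have h5 : 0 ≤ eval x pe * eval x q := by
        rw [h1]; exact Finset.sum_nonneg fun i _ => sq_nonneg _
      exact nonneg_of_mul_nonneg_right h5 (by linarith)
    rw [abs_of_nonneg h4, div_mul_eq_mul_div, le_div_iff₀ hx]
    nlinarith
  have hfin : |l (w * q)| ≤ M * S := hM ⟨q, hq⟩ S hbd
  have hSeq : S = ε * l (w * q) := by
    have h1 : l (p * q) = 0 := hl _ ⟨q, hq, rfl⟩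
    have h2 : pe * q = p * q + ε • (w * q) := by
      simp only [pe, add_mul, smul_mul_assoc]
    rw [hS, h2, map_add, map_smul, h1, zero_add, smul_eq_mul]
  have h1 : l (w * q) ≤ |M| * S := by
    calc l (w * q) ≤ |l (w * q)| := le_abs_self _
      _ ≤ M * S := hfin
      _ ≤ |M| * S := mul_le_mul_of_nonneg_right (le_abs_self M) hSpos.le
  have h2 : (|M| + 1) * S = l (w * q) := by
    rw [hSeq, hε]
    field_simp
  linarith

/-- Hilbert's multiplier theorem: for every nonnegative ternary form `p`
of degree `2d` (`d ≥ 2`) there is a nonzero nonnegative form `q` of degree `2d - 4`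
such that `p * q` is a sum of squares of forms of degree `2d - 2`. -/
theorem stmt_8 (d : ℕ) (hd : 2 ≤ d) (p : MvPolynomial (Fin 3) ℝ)
    (hp : p.IsHomogeneous (2 * d)) (hpos : ∀ x : Fin 3 → ℝ, 0 ≤ eval x p) :
    ∃ q : MvPolynomial (Fin 3) ℝ, q ≠ 0 ∧ q.IsHomogeneous (2 * d - 4) ∧
      (∀ x : Fin 3 → ℝ, 0 ≤ eval x q) ∧
      ∃ (k : ℕ) (f : Fin k → MvPolynomial (Fin 3) ℝ),
        (∀ i, (f i).IsHomogeneous (2 * d - 2)) ∧ p * q = ∑ i, (f i) ^ 2 := by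
  by_cases hp0 : p = 0
  · refine ⟨X 0 ^ (2 * d - 4), pow_ne_zero _ (X_ne_zero 0), ?_, ?_, 0, fun _ => 0,
      fun i => i.elim0, by simp [hp0]⟩
    · simpa using (isHomogeneous_X ℝ (0 : Fin 3)).pow (2 * d - 4)
    · intro x
      have hev : Even (2 * d - 4) := ⟨d - 2, by omega⟩
      simpa using hev.pow_nonneg (x 0)
  · obtain ⟨q, hq0, hq, k, f, hf, e⟩ := hm_perturb hd hp hpos hp0
    refine ⟨q, hq0, hq, ?_, k, f, hf, e⟩
    apply hm_nonneg hp0 hpos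
    intro x
    rw [e]
    simp only [map_sum, map_pow]
    exact Finset.sum_nonneg fun i _ => sq_nonneg _
end
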